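/- arXiv:1309.2123 — 2 statements merged into one kernel-verified Lean document; each statement's English description precedes it below -/
import Mathlib

section
/- Let α, β, c be real numbers such that 1−β, α+β+2c+2, c+1, α+β+c+1 and α+β+2c+1 are not nonpositive integers, let x ∈ (0,1) be real, and let t be real with 0 < |t| < 1. Set δ = ((1+t) − √((1+t)² − 4xt))/(2t), with the principal branch of the square root. Then Σ_{n=0}^{∞} ((α+β+c+1)_n (c+1)_n)/((α+β+2c+2)_n) · Y_n^{(α,β)}(x;c) · t^n/n! = (δ^{α+c+1})/(x^{c+1}·(x−tδ)^{α}) · F(−β−c, α+c+1; 1−β; δ) · F(c+1, β+c+1; α+β+2c+2; tδ/x), where complex powers are taken with the principal branch. -/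
noncomputable section

/-- Rising factorial (Pochhammer symbol) `(a)_n = a(a+1)⋯(a+n-1)`. -/
def poch (a : ℝ) (n : ℕ) : ℝ := ∏ i ∈ Finset.range n, (a + (i : ℝ))

/-- The Gauss hypergeometric series `F(a,b;c;x) = Σ_{k≥0} (a)_k (b)_k / ((c)_k k!) xᵏ`. -/
def hyp (a b c x : ℝ) : ℝ :=
  ∑' k : ℕ, poch a k * poch b k / (poch c k * (Nat.factorial k : ℝ)) * x ^ k

/-- The Gauss hypergeometric function for real arguments `z < 1`, extended by
(principal branch) analytic continuation to arguments `z ≤ -1` via the Pfaff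
transformation `F(a,b;c;z) = (1-z)^{-a} F(a, c-b; c; z/(z-1))`, whose right-hand
side converges for all `z < 0`. -/
def hypExt (a b c z : ℝ) : ℝ :=
  if z < 0 then (1 - z) ^ (-a) * hyp a (c - b) c (z / (z - 1)) else hyp a b c z

/-- `δ = ((1+t) − √((1+t)² − 4xt))/(2t)`; for `x ∈ (0,1)` and `0 < |t| < 1` the
radicand is positive, so the principal branch of the complex square root is
the real square root. -/
def deltaF (x t : ℝ) : ℝ := ((1 + t) - Real.sqrt ((1 + t)^2 - 4*x*t)) / (2*t)

/-- `Y_n^{(α,β)}(x;c)`. -/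
def Yfun (α β c : ℝ) (n : ℕ) (x : ℝ) : ℝ :=
  (-1 : ℝ)^n * (poch (α + c + 1) n / poch (α + β + c + 1) n)
    * hyp (-(n:ℝ) - β - c) ((n:ℝ) + α + c + 1) (1 - β) x

/-- `Ỹ_n^{(α,β)}(x;c)`. -/
def Yt (α β c : ℝ) (n : ℕ) (x : ℝ) : ℝ :=
  (poch (c + 1) n * poch (α + β + c + 1) n / poch (α + β + 2*c + 1) (2*n)) * Yfun α β c n x

open Filter Topology
open FormalMultilinearSeries (ofScalars ofScalars_apply_eq ofScalars_series_injective)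

/-- hypergeometric coefficients -/
def hco (a b c : ℝ) (k : ℕ) : ℝ := poch a k * poch b k / (poch c k * (Nat.factorial k : ℝ))

lemma poch_succ (a : ℝ) (n : ℕ) : poch a (n+1) = poch a n * (a + n) := by
  simp [poch, Finset.prod_range_succ]

lemma poch_zero (a : ℝ) : poch a 0 = 1 := by simp [poch]

lemma poch_ne (a : ℝ) (h : ∀ m : ℕ, a ≠ -(m:ℝ)) (n : ℕ) : poch a n ≠ 0 := by
  unfold poch
  refine Finset.prod_ne_zero_iff.2 fun i _ hi => h i (by linarith)

lemma poch_eq (a : ℝ) (n : ℕ) : poch a n = (ascPochhammer ℝ n).eval a := by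
  induction n with
  | zero => simp [poch]
  | succ n ih => rw [poch_succ, ascPochhammer_succ_eval, ih]

lemma hco_zero (a b c : ℝ) : hco a b c 0 = 1 := by simp [hco, poch]

lemma series_eq (a b c : ℝ) :
    ordinaryHypergeometricSeries ℝ a b c = ofScalars ℝ (hco a b c) := by
  unfold ordinaryHypergeometricSeries
  congr 1
  ext n
  simp only [hco, poch_eq, ordinaryHypergeometricCoefficient, div_eq_mul_inv, mul_inv]
  ring

lemma one_le_radius (a b c : ℝ) : 1 ≤ (ofScalars ℝ (hco a b c)).radius := by
  rw [← series_eq]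
  by_cases h : ∀ kn : ℕ, (kn:ℝ) ≠ -a ∧ (kn:ℝ) ≠ -b ∧ (kn:ℝ) ≠ -c
  · rw [ordinaryHypergeometricSeries_radius_eq_one ℝ a b c h]
  · push Not at h
    obtain ⟨k, hk⟩ := h
    by_cases h1 : (k:ℝ) = -a
    · have : a = -(k:ℝ) := by linarith
      rw [this, ordinaryHypergeometric_radius_top_of_neg_nat₁]; exact le_top
    by_cases h2 : (k:ℝ) = -b
    · have : b = -(k:ℝ) := by linarith
      rw [this, ordinaryHypergeometric_radius_top_of_neg_nat₂]; exact le_top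
    have : c = -(k:ℝ) := by linarith [hk h1 h2]
    rw [this, ordinaryHypergeometric_radius_top_of_neg_nat₃]; exact le_top

lemma fps_of_radius (u : ℕ → ℝ) (h : 1 ≤ (ofScalars ℝ u).radius) :
    HasFPowerSeriesOnBall (fun z => ∑' k, u k * z ^ k) (ofScalars ℝ u) 0 1 := by
  have h0 := ((ofScalars ℝ u).hasFPowerSeriesOnBall (lt_of_lt_of_le one_pos h)).mono one_pos h
  have : (ofScalars ℝ u).sum = (fun z => ∑' k, u k * z ^ k) := by
    ext z
    simp [FormalMultilinearSeries.sum, mul_comm]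
  rwa [this] at h0

lemma hyp_fps (a b c : ℝ) : HasFPowerSeriesOnBall (hyp a b c) (ofScalars ℝ (hco a b c)) 0 1 :=
  fps_of_radius _ (one_le_radius a b c)

lemma mem_eball {z : ℝ} (hz : |z| < 1) : z ∈ Metric.eball (0:ℝ) 1 := by
  rw [show (1:ENNReal) = ENNReal.ofReal 1 by simp, Metric.eball_ofReal]
  simpa using hz

lemma hco_summable (a b c : ℝ) {z : ℝ} (hz : |z| < 1) :
    Summable (fun k => |hco a b c k| * |z| ^ k) := by
  have := (ofScalars ℝ (hco a b c)).summable_norm_apply (x := z)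
    (Metric.eball_subset_eball (one_le_radius a b c) (mem_eball hz))
  simpa [abs_mul, mul_comm] using this

lemma hyp_analyticAt (a b c : ℝ) {z : ℝ} (hz : |z| < 1) : AnalyticAt ℝ (hyp a b c) z :=
  (hyp_fps a b c).analyticAt_of_mem (mem_eball hz)

lemma iter_of_fps {f : ℝ → ℝ} {u : ℕ → ℝ} {r} (h : HasFPowerSeriesOnBall f (ofScalars ℝ u) 0 r)
    (n : ℕ) : iteratedDeriv n f 0 = n.factorial * u n := by
  have h1 := (h.hasFPowerSeriesAt.analyticAt).hasFPowerSeriesAt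
  have h2 := h.hasFPowerSeriesAt.eq_formalMultilinearSeries h1
  have h3 := ofScalars_series_injective ℝ ℝ h2
  have := congrFun h3 n
  rw [this]
  have : (n.factorial : ℝ) ≠ 0 := by positivity
  field_simp

/-- the hypergeometric differential operator -/
def Hop (a b c : ℝ) (y : ℝ → ℝ) (z : ℝ) : ℝ :=
  z * (1 - z) * deriv (deriv y) z + (c - (a + b + 1) * z) * deriv y z - a * b * y z

lemma Hop_analytic {a b c : ℝ} {y : ℝ → ℝ} {z : ℝ} (h : AnalyticAt ℝ y z) :
    AnalyticAt ℝ (Hop a b c y) z := by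
  have h1 := h.deriv
  have h2 := h1.deriv
  unfold Hop
  fun_prop

lemma Hop_deriv {a b c : ℝ} {y : ℝ → ℝ} {z : ℝ} (h : AnalyticAt ℝ y z) :
    deriv (Hop a b c y) z = Hop (a+1) (b+1) (c+1) (deriv y) z := by
  have h0 := h.differentiableAt.hasDerivAt
  have h1 := h.deriv.differentiableAt.hasDerivAt
  have h2 := h.deriv.deriv.differentiableAt.hasDerivAt
  have hid := hasDerivAt_id z
  have := (((hid.mul (hid.const_sub 1)).mul h2).add
    (((hid.const_mul (a+b+1)).const_sub c).mul h1)).sub (h0.const_mul (a*b))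
  have h3 := this.deriv
  have h4 : deriv (Hop a b c y) z = _ := h3
  rw [h4]
  simp only [Hop, id, Pi.mul_apply]
  ring

lemma Hop_iter {y : ℝ → ℝ} {z : ℝ} (n : ℕ) : ∀ {a b c : ℝ} (_ : AnalyticAt ℝ y z),
    iteratedDeriv n (Hop a b c y) z = Hop (a+n) (b+n) (c+n) (iteratedDeriv n y) z := by
  induction n generalizing y with
  | zero => intro a b c h; simp
  | succ n ih =>
    intro a b c h
    rw [iteratedDeriv_succ', iteratedDeriv_succ']
    have : deriv (Hop a b c y) =ᶠ[𝓝 z] Hop (a+1) (b+1) (c+1) (deriv y) := by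
      filter_upwards [h.eventually_analyticAt] with w hw using Hop_deriv hw
    rw [this.iteratedDeriv_eq n, ih h.deriv]
    push_cast
    ring_nf

lemma Hop_iter_zero {a b c : ℝ} {y : ℝ → ℝ} (n : ℕ) (h : AnalyticAt ℝ y 0) :
    iteratedDeriv n (Hop a b c y) 0 =
      (c+n) * iteratedDeriv (n+1) y 0 - (a+n)*(b+n) * iteratedDeriv n y 0 := by
  rw [Hop_iter n h, iteratedDeriv_succ]
  simp [Hop]

lemma eq_of_iter {f g : ℝ → ℝ} {z : ℝ} (hf : AnalyticAt ℝ f z) (hg : AnalyticAt ℝ g z)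
    (h : ∀ n, iteratedDeriv n f z = iteratedDeriv n g z) : f =ᶠ[𝓝 z] g := by
  have h1 := hf.hasFPowerSeriesAt
  have h2 := hg.hasFPowerSeriesAt
  simp only [h] at h1
  have h3 := h1.sub h2
  rw [sub_self] at h3
  filter_upwards [h3.eventually_eq_zero] with w hw
  simpa [sub_eq_zero] using hw

lemma hco_succ {a b c : ℝ} (hc : ∀ m : ℕ, c ≠ -(m:ℝ)) (n : ℕ) :
    (c+n) * ((n+1).factorial * hco a b c (n+1)) = (a+n)*(b+n) * (n.factorial * hco a b c n) := by
  have h1 := poch_ne c hc n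
  have h3 : c + n ≠ 0 := fun h => hc n (by linarith)
  have h4 : (n.factorial:ℝ) ≠ 0 := by positivity
  have h5 : (n:ℝ)+1 ≠ 0 := by positivity
  simp only [hco, poch_succ, Nat.factorial_succ]
  push_cast
  field_simp

lemma ball_preconn : IsPreconnected (Metric.ball (0:ℝ) 1) := (convex_ball 0 1).isPreconnected

lemma hyp_ode {a b c : ℝ} (hc : ∀ m : ℕ, c ≠ -(m:ℝ)) {z : ℝ} (hz : |z| < 1) :
    Hop a b c (hyp a b c) z = 0 := by
  have han : AnalyticOnNhd ℝ (Hop a b c (hyp a b c)) (Metric.ball 0 1) := fun w hw =>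
    Hop_analytic (hyp_analyticAt a b c (by simpa using hw))
  have h0 : Hop a b c (hyp a b c) =ᶠ[𝓝 0] (fun _ => (0:ℝ)) := by
    have hy := hyp_analyticAt a b c (z := 0) (by simp)
    refine eq_of_iter (Hop_analytic hy) analyticAt_const fun n => ?_
    rw [Hop_iter_zero n hy, iter_of_fps (hyp_fps a b c), iter_of_fps (hyp_fps a b c), hco_succ hc]
    simp
  exact han.eqOn_of_preconnected_of_eventuallyEq (fun w _ => analyticAt_const) ball_preconn
    (by simp) h0 (by simpa using hz)

lemma hyp_zero (a b c : ℝ) : hyp a b c 0 = 1 := by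
  have := iter_of_fps (hyp_fps a b c) 0
  simpa [hco_zero] using this

lemma ode_unique {a b c : ℝ} (hc : ∀ m : ℕ, c ≠ -(m:ℝ)) {y : ℝ → ℝ} (hy : AnalyticAt ℝ y 0)
    (ho : Hop a b c y =ᶠ[𝓝 0] (fun _ => (0:ℝ))) : y =ᶠ[𝓝 0] fun z => y 0 * hyp a b c z := by
  have hh := hyp_analyticAt a b c (z := 0) (by simp)
  refine eq_of_iter hy (by fun_prop) fun n => ?_
  rw [iteratedDeriv_const_mul_field, iter_of_fps (hyp_fps a b c)]
  induction n with
  | zero => simp [hco_zero]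
  | succ n ih =>
    have h1 := Hop_iter_zero (a := a) (b := b) (c := c) n hy
    rw [ho.iteratedDeriv_eq n] at h1
    have h2 : iteratedDeriv n (fun _ : ℝ => (0:ℝ)) 0 = 0 := by simp
    rw [h2, ih] at h1
    have h3 : c + n ≠ 0 := fun h => hc n (by linarith)
    apply mul_left_cancel₀ h3
    have := hco_succ (a := a) (b := b) hc n
    linear_combination -h1 - y 0 * this

lemma ode_unique_on {a b c : ℝ} (hc : ∀ m : ℕ, c ≠ -(m:ℝ)) {y : ℝ → ℝ} {I : Set ℝ}
    (hI : IsPreconnected I) (hI1 : I ⊆ Metric.ball 0 1) (h0 : (0:ℝ) ∈ I)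
    (hy : AnalyticOnNhd ℝ y I)
    (ho : Hop a b c y =ᶠ[𝓝 0] (fun _ => (0:ℝ))) {z : ℝ} (hz : z ∈ I) :
    y z = y 0 * hyp a b c z := by
  refine hy.eqOn_of_preconnected_of_eventuallyEq (g := fun z => y 0 * hyp a b c z) (fun w hw => ?_)
    hI h0 (ode_unique hc (hy 0 h0) ho) hz
  have := hyp_analyticAt a b c (z := w) (by simpa using hI1 hw)
  fun_prop

lemma an_rpow {E : Type*} [NormedAddCommGroup E] [NormedSpace ℝ E] {f : E → ℝ} {x : E}
    (hf : AnalyticAt ℝ f x) (hx : 0 < f x) (p : ℝ) : AnalyticAt ℝ (fun y => f y ^ p) x := by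
  have h0 : AnalyticAt ℝ (fun y => Real.log (f y) * p) x :=
    ((analyticAt_log hx).fun_comp hf).mul analyticAt_const
  have h1 : AnalyticAt ℝ (fun y => Real.exp (Real.log (f y) * p)) x :=
    AnalyticAt.fun_comp (g := Real.exp) (f := fun y => Real.log (f y) * p) analyticAt_rexp h0
  refine h1.congr ?_
  filter_upwards [hf.continuousAt.eventually (eventually_gt_nhds hx)] with y hy
  rw [Real.rpow_def_of_pos hy]

lemma an_sqrt {E : Type*} [NormedAddCommGroup E] [NormedSpace ℝ E] {f : E → ℝ} {x : E}
    (hf : AnalyticAt ℝ f x) (hx : 0 < f x) : AnalyticAt ℝ (fun y => Real.sqrt (f y)) x := by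
  simp only [Real.sqrt_eq_rpow]
  exact an_rpow hf hx _

lemma pfaff_alg (a b c z P h0 h1 h2 : ℝ) (hz : 1 - z ≠ 0)
    (ho : (z/(z-1)) * (1 - z/(z-1)) * h2 + (c - (a + (c - b) + 1) * (z/(z-1))) * h1
      - a * (c-b) * h0 = 0) :
    z * (1 - z) * (a * P / (1 - z) * (a / (1-z) * h0 - h1 / (1-z)^2)
      + P * ((a / (1-z)^2) * h0 + a / (1-z) * (h1 * (-1/(1-z)^2))
        - (h2 * (-1/(1-z)^2) / (1-z)^2 + h1 * (2/(1-z)^3))))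
      + (c - (a + b + 1) * z) * (P * (a / (1-z) * h0 - h1 / (1-z)^2)) - a * b * (P * h0) = 0 := by
  have hz' : z - 1 ≠ 0 := fun h => hz (by linarith)
  have e : z - 1 = -(1 - z) := by ring
  rw [e] at ho
  set q := 1 - z with hq
  have hzq : z = 1 - q := by rw [hq]; ring
  rw [hzq] at ho ⊢
  field_simp at ho ⊢
  linear_combination (-P) * ho

lemma hz_hasDeriv {z : ℝ} (hz : 1 - z ≠ 0) :
    HasDerivAt (fun z : ℝ => z / (z - 1)) (-1 / (1-z)^2) z := by
  have hz' : z - 1 ≠ 0 := fun h => hz (by linarith)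
  have := (hasDerivAt_id z).div ((hasDerivAt_id z).sub_const 1) hz'
  refine this.congr_deriv ?_
  simp only [id]
  rw [show (z-1)^2 = (1-z)^2 by ring]
  ring

lemma P_hasDeriv (a : ℝ) {z : ℝ} (hz : 0 < 1 - z) :
    HasDerivAt (fun z : ℝ => (1 - z) ^ (-a)) (a * (1-z)^(-a) / (1-z)) z := by
  have := ((hasDerivAt_id z).const_sub 1).rpow_const (p := -a) (Or.inl hz.ne')
  refine this.congr_deriv ?_
  simp only [id]
  rw [Real.rpow_sub_one hz.ne']
  ring

lemma pfaff_deriv (a : ℝ) {h : ℝ → ℝ} {z : ℝ} (hz : 0 < 1 - z) (hh : AnalyticAt ℝ h (z/(z-1))) :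
    HasDerivAt (fun z => (1 - z) ^ (-a) * h (z/(z-1)))
      ((1-z)^(-a) * (a / (1-z) * h (z/(z-1)) - deriv h (z/(z-1)) / (1-z)^2)) z := by
  have h1 := hh.differentiableAt.hasDerivAt.comp z (hz_hasDeriv hz.ne')
  have := (P_hasDeriv a hz).mul h1
  refine this.congr_deriv ?_
  simp only [Function.comp]
  field_simp
  ring

lemma pfaff_deriv2 (a : ℝ) {h : ℝ → ℝ} {z : ℝ} (hz : 0 < 1 - z) (hh : AnalyticAt ℝ h (z/(z-1))) :
    HasDerivAt (fun z => (1-z)^(-a) * (a / (1-z) * h (z/(z-1)) - deriv h (z/(z-1)) / (1-z)^2))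
      (a * (1-z)^(-a) / (1 - z) * (a / (1-z) * h (z/(z-1)) - deriv h (z/(z-1)) / (1-z)^2)
      + (1-z)^(-a) * ((a / (1-z)^2) * h (z/(z-1)) + a / (1-z) * (deriv h (z/(z-1)) * (-1/(1-z)^2))
        - (deriv (deriv h) (z/(z-1)) * (-1/(1-z)^2) / (1-z)^2
          + deriv h (z/(z-1)) * (2/(1-z)^3)))) z := by
  have h1 := hh.differentiableAt.hasDerivAt.comp z (hz_hasDeriv hz.ne')
  have h2 := hh.deriv.differentiableAt.hasDerivAt.comp z (hz_hasDeriv hz.ne')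
  have hs := (hasDerivAt_id z).const_sub 1
  have h3 := ((hasDerivAt_const z a).div hs hz.ne').mul h1
  have h4 := h2.div (hs.pow 2) (pow_ne_zero 2 hz.ne')
  have := (P_hasDeriv a hz).mul (h3.sub h4)
  refine this.congr_deriv ?_
  simp only [Function.comp, id, Pi.mul_apply, Pi.sub_apply, Pi.div_apply, Pi.pow_apply]
  field_simp
  ring

lemma abs_z' {z : ℝ} (h2 : z < 1/2) : |z/(z-1)| < 1 := by
  have : z / (z-1) = -(z / (1-z)) := by
    rw [← div_neg]; ring_nf
  rw [this, abs_neg, abs_lt]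
  have hz : 0 < 1 - z := by linarith
  constructor
  · rw [lt_div_iff₀ hz]; linarith
  · rw [div_lt_one hz]; linarith

lemma pfaff_analytic (a b c : ℝ) {z : ℝ} (h2 : z < 1/2) :
    AnalyticAt ℝ (fun z => (1-z)^(-a) * hyp a b c (z/(z-1))) z := by
  have hz : 0 < 1 - z := by linarith
  have hz' : z - 1 ≠ 0 := by linarith
  have h1 : AnalyticAt ℝ (fun z : ℝ => z/(z-1)) z := by
    fun_prop (disch := assumption)
  have h3 : AnalyticAt ℝ (fun z => hyp a b c (z/(z-1))) z :=
    AnalyticAt.fun_comp (hyp_analyticAt a b c (abs_z' h2)) h1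
  have h4 : AnalyticAt ℝ (fun z : ℝ => (1-z)^(-a)) z := by
    refine an_rpow ?_ hz _
    fun_prop
  exact h4.mul h3

lemma pfaff {a b c : ℝ} (hc : ∀ m : ℕ, c ≠ -(m:ℝ)) {z : ℝ} (h1 : -1 < z) (h2 : z < 1/2) :
    hyp a b c z = (1-z)^(-a) * hyp a (c-b) c (z/(z-1)) := by
  set y : ℝ → ℝ := fun z => (1-z)^(-a) * hyp a (c-b) c (z/(z-1)) with hy
  have hy0 : y 0 = 1 := by simp [hy, hyp_zero]
  have := ode_unique_on (a := a) (b := b) hc (y := y) (I := Set.Ioo (-1) (1/2)) isPreconnected_Ioo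
    (by intro w hw; rw [Set.mem_Ioo] at hw; simp only [Metric.mem_ball, dist_zero_right,
          Real.norm_eq_abs, abs_lt]; constructor <;> linarith [hw.1, hw.2])
    (by norm_num) (fun w hw => pfaff_analytic a (c-b) c hw.2) ?_ ⟨h1, h2⟩
  · rw [hy0, one_mul] at this
    rw [← this]
  · have hev : ∀ᶠ w : ℝ in 𝓝 0, w < 1/2 := eventually_lt_nhds (by norm_num)
    have hd : ∀ w : ℝ, w < 1/2 → deriv y w = (1-w)^(-a) * (a / (1-w) * hyp a (c-b) c (w/(w-1))
        - deriv (hyp a (c-b) c) (w/(w-1)) / (1-w)^2) := fun w hw =>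
      (pfaff_deriv a (by linarith) (hyp_analyticAt a (c-b) c (abs_z' hw))).deriv
    filter_upwards [hev] with w hw
    have hd2 : deriv y =ᶠ[𝓝 w] (fun w => (1-w)^(-a) * (a / (1-w) * hyp a (c-b) c (w/(w-1))
        - deriv (hyp a (c-b) c) (w/(w-1)) / (1-w)^2)) := by
      filter_upwards [eventually_lt_nhds hw] with v hv using hd v hv
    have hw' : 0 < 1 - w := by linarith
    unfold Hop
    rw [hd2.deriv_eq, hd w hw,
      (pfaff_deriv2 a hw' (hyp_analyticAt a (c-b) c (abs_z' hw))).deriv]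
    exact pfaff_alg a b c w _ _ _ _ hw'.ne' (hyp_ode hc (abs_z' hw))

lemma hypExt_eq {a b c : ℝ} (hc : ∀ m : ℕ, c ≠ -(m:ℝ)) {z : ℝ} (h2 : z < 1/2) :
    hypExt a b c z = (1-z)^(-a) * hyp a (c-b) c (z/(z-1)) := by
  unfold hypExt
  split_ifs with h
  · rfl
  · exact pfaff hc (by linarith) h2

lemma hypExt_analytic {a b c : ℝ} (hc : ∀ m : ℕ, c ≠ -(m:ℝ)) {z : ℝ} (h1 : z < 1) :
    AnalyticAt ℝ (hypExt a b c) z := by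
  by_cases h2 : z < 1/2
  · refine (pfaff_analytic a (c-b) c h2).congr ?_
    filter_upwards [eventually_lt_nhds h2] with w hw using (hypExt_eq hc hw).symm
  · have h0 : 0 < z := by linarith
    refine (hyp_analyticAt a b c (z := z) (by rw [abs_of_pos h0]; exact h1)).congr ?_
    filter_upwards [eventually_gt_nhds h0] with w hw
    simp [hypExt, not_lt.2 hw.le]

/-- partial derivative in the first variable -/
def Dx (F : ℝ × ℝ → ℝ) (p : ℝ × ℝ) : ℝ := fderiv ℝ F p (1, 0)
/-- partial derivative in the second variable -/
def Dt (F : ℝ × ℝ → ℝ) (p : ℝ × ℝ) : ℝ := fderiv ℝ F p (0, 1)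

/-- the partial differential operator -/
def PD (a b c : ℝ) (F : ℝ × ℝ → ℝ) (p : ℝ × ℝ) : ℝ :=
  p.1 * (1 - p.1) * Dx (Dx F) p + (c - (a + b + 1) * p.1) * Dx F p
    - (a * b * F p + (b - a) * (p.2 * Dt F p) - (p.2 ^ 2 * Dt (Dt F) p + p.2 * Dt F p))

lemma Dx_an {F : ℝ × ℝ → ℝ} {p : ℝ × ℝ} (h : AnalyticAt ℝ F p) : AnalyticAt ℝ (Dx F) p :=
  (ContinuousLinearMap.apply ℝ ℝ ((1:ℝ), (0:ℝ))).analyticAt _ |>.fun_comp h.fderiv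

lemma Dt_an {F : ℝ × ℝ → ℝ} {p : ℝ × ℝ} (h : AnalyticAt ℝ F p) : AnalyticAt ℝ (Dt F) p :=
  (ContinuousLinearMap.apply ℝ ℝ ((0:ℝ), (1:ℝ))).analyticAt _ |>.fun_comp h.fderiv

lemma PD_an {a b c : ℝ} {F : ℝ × ℝ → ℝ} {p : ℝ × ℝ} (h : AnalyticAt ℝ F p) :
    AnalyticAt ℝ (PD a b c F) p := by
  have h1 := Dx_an h
  have h2 := Dx_an h1
  have h3 := Dt_an h
  have h4 := Dt_an h3
  have h5 : AnalyticAt ℝ (fun p : ℝ × ℝ => p.1) p := analyticAt_fst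
  have h6 : AnalyticAt ℝ (fun p : ℝ × ℝ => p.2) p := analyticAt_snd
  unfold PD
  fun_prop

lemma slice_x {F : ℝ × ℝ → ℝ} {x t : ℝ} (h : AnalyticAt ℝ F (x, t)) :
    HasDerivAt (fun y => F (y, t)) (Dx F (x, t)) x := by
  have h1 := h.differentiableAt.hasFDerivAt
  have h2 : HasDerivAt (fun y : ℝ => (y, t)) ((1:ℝ), (0:ℝ)) x :=
    (hasDerivAt_id x).prodMk (hasDerivAt_const x t)
  exact h1.comp_hasDerivAt x h2

lemma slice_t {F : ℝ × ℝ → ℝ} {x t : ℝ} (h : AnalyticAt ℝ F (x, t)) :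
    HasDerivAt (fun y => F (x, y)) (Dt F (x, t)) t := by
  have h1 := h.differentiableAt.hasFDerivAt
  have h2 : HasDerivAt (fun y : ℝ => (x, y)) ((0:ℝ), (1:ℝ)) t :=
    (hasDerivAt_const t x).prodMk (hasDerivAt_id t)
  exact h1.comp_hasDerivAt t h2

lemma Dt_Dx {F : ℝ × ℝ → ℝ} {p : ℝ × ℝ} (h : AnalyticAt ℝ F p) :
    Dt (Dx F) p = Dx (Dt F) p := by
  have h1 := h.fderiv.differentiableAt
  have e : ∀ u v : ℝ × ℝ, fderiv ℝ (fun q => fderiv ℝ F q u) p v = fderiv ℝ (fderiv ℝ F) p v u := by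
    intro u v
    have := h1.hasFDerivAt.clm_apply (hasFDerivAt_const u p)
    rw [this.fderiv]
    simp
  have hs : IsSymmSndFDerivAt ℝ F p :=
    (h.contDiffAt (n := ⊤)).isSymmSndFDerivAt (by simp)
  unfold Dt Dx
  rw [e, e]
  exact hs _ _

lemma Dx_congr {F G : ℝ × ℝ → ℝ} {p : ℝ × ℝ} (h : F =ᶠ[𝓝 p] G) : Dx F p = Dx G p := by
  unfold Dx; rw [h.fderiv_eq]

lemma Dt_congr {F G : ℝ × ℝ → ℝ} {p : ℝ × ℝ} (h : F =ᶠ[𝓝 p] G) : Dt F p = Dt G p := by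
  unfold Dt; rw [h.fderiv_eq]

lemma PD_Dt {a b c : ℝ} {F : ℝ × ℝ → ℝ} {p : ℝ × ℝ} (h : AnalyticAt ℝ F p) :
    Dt (PD a b c F) p = PD (a+1) (b-1) c (Dt F) p := by
  obtain ⟨x, t⟩ := p
  have c1 : Dt (Dx F) (x,t) = Dx (Dt F) (x,t) := Dt_Dx h
  have c2 : Dt (Dx (Dx F)) (x,t) = Dx (Dx (Dt F)) (x,t) := by
    rw [Dt_Dx (Dx_an h)]
    apply Dx_congr
    filter_upwards [h.eventually_analyticAt] with q hq using Dt_Dx hq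
  have hid := hasDerivAt_id t
  have h0 := slice_t h
  have h1 := slice_t (Dx_an h)
  have h2 := slice_t (Dx_an (Dx_an h))
  have h3 := slice_t (Dt_an h)
  have h4 := slice_t (Dt_an (Dt_an h))
  have H := slice_t (PD_an (a := a) (b := b) (c := c) h)
  have K := ((h2.const_mul (x * (1-x))).add (h1.const_mul (c - (a+b+1)*x))).sub
    (((h0.const_mul (a*b)).add ((hid.mul h3).const_mul (b-a))).sub
      (((hid.pow 2).mul h4).add (hid.mul h3)))
  have e := H.unique K
  rw [e, c1, c2]
  simp only [PD, id, Pi.pow_apply]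
  ring

lemma PD_iter {F : ℝ × ℝ → ℝ} {p : ℝ × ℝ} {a b c : ℝ} (h : AnalyticAt ℝ F p)
    (h0 : PD a b c F =ᶠ[𝓝 p] fun _ => (0:ℝ)) (n : ℕ) :
    AnalyticAt ℝ (Dt^[n] F) p ∧ PD (a+n) (b-n) c (Dt^[n] F) =ᶠ[𝓝 p] fun _ => (0:ℝ) := by
  induction n with
  | zero => simpa using ⟨h, h0⟩
  | succ n ih =>
    obtain ⟨i1, i2⟩ := ih
    rw [Function.iterate_succ_apply']
    refine ⟨Dt_an i1, ?_⟩
    filter_upwards [i1.eventually_analyticAt, i2.eventuallyEq_nhds] with q hq hq2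
    have := PD_Dt (a := a+n) (b := b-n) (c := c) hq
    rw [Dt_congr hq2] at this
    have z : Dt (fun _ => (0:ℝ)) q = 0 := by simp [Dt]
    rw [z] at this
    push_cast
    rw [show a + ((n:ℝ)+1) = a + n + 1 by ring, show b - ((n:ℝ)+1) = b - n - 1 by ring, ← this]

lemma Dt_iter_eq {F : ℝ × ℝ → ℝ} {x : ℝ} (n : ℕ) : ∀ {t : ℝ} (_ : AnalyticAt ℝ F (x, t)),
    (Dt^[n] F) (x, t) = iteratedDeriv n (fun τ => F (x, τ)) t := by
  induction n generalizing F with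
  | zero => intro t h; simp
  | succ n ih =>
    intro t h
    rw [Function.iterate_succ_apply, ih (Dt_an h), iteratedDeriv_succ']
    apply Filter.EventuallyEq.iteratedDeriv_eq
    have hc : ContinuousAt (fun τ : ℝ => (x, τ)) t := by fun_prop
    filter_upwards [hc.eventually h.eventually_analyticAt] with τ hτ
    exact (slice_t hτ).deriv.symm

lemma Hop_slice {G : ℝ × ℝ → ℝ} {x : ℝ} {a b c : ℝ} (h : AnalyticAt ℝ G (x, 0)) :
    Hop a b c (fun y => G (y, 0)) x = PD a b c G (x, 0) := by
  have hc : ContinuousAt (fun y : ℝ => (y, (0:ℝ))) x := by fun_prop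
  have e : deriv (fun y => G (y, 0)) =ᶠ[𝓝 x] fun y => Dx G (y, 0) := by
    filter_upwards [hc.eventually h.eventually_analyticAt] with y hy
    exact (slice_x hy).deriv
  unfold Hop PD
  rw [e.deriv_eq, e.eq_of_nhds, (slice_x (Dx_an h)).deriv]
  simp

/-- key consequence of the PDE -/
lemma PD_conclusion {F : ℝ × ℝ → ℝ} {a b c : ℝ} (hc : ∀ m : ℕ, c ≠ -(m:ℝ))
    (han : ∀ x : ℝ, |x| < 1 → AnalyticAt ℝ F (x, 0))
    (hpd : PD a b c F =ᶠ[𝓝 (0,0)] fun _ => (0:ℝ)) (n : ℕ) {x : ℝ} (hx : |x| < 1) :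
    iteratedDeriv n (fun t => F (x, t)) 0 =
      iteratedDeriv n (fun t => F (0, t)) 0 * hyp (a+n) (b-n) c x := by
  have han' : ∀ x : ℝ, |x| < 1 → AnalyticAt ℝ (Dt^[n] F) (x, 0) := by
    intro x hx
    have h := han x hx
    induction n with
    | zero => simpa using h
    | succ n ih => rw [Function.iterate_succ_apply']; exact Dt_an ih
  have hi : ∀ x : ℝ, AnalyticAt ℝ (fun y : ℝ => (y, (0:ℝ))) x := fun x => by fun_prop
  have := ode_unique_on (a := a+n) (b := b-n) hc (y := fun y => (Dt^[n] F) (y, 0))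
    ball_preconn subset_rfl (by simp)
    (fun w hw => AnalyticAt.fun_comp (f := fun y : ℝ => (y, (0:ℝ))) (han' w (by simpa using hw)) (hi w)) ?_
    (z := x) (by simpa using hx)
  · simp only [Dt_iter_eq n (han x hx), Dt_iter_eq n (han 0 (by simp))] at this
    exact this
  · have hcn : ContinuousAt (fun y : ℝ => (y, (0:ℝ))) 0 := by fun_prop
    obtain ⟨_, h2⟩ := PD_iter (han 0 (by simp)) hpd n
    filter_upwards [hcn.eventually h2, hcn.eventually (han' 0 (by simp)).eventually_analyticAt]
      with y hy hy2
    rw [Hop_slice hy2]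
    exact hy

/-- the square root -/
def Qf (p : ℝ × ℝ) : ℝ := Real.sqrt ((1 + p.2)^2 - 4 * p.1 * p.2)
/-- rationalized delta -/
def sf (p : ℝ × ℝ) : ℝ := 2 * p.1 / (1 + p.2 + Qf p)
/-- the second separated variable -/
def wf (p : ℝ × ℝ) : ℝ := - p.2 / (1 - p.2 * sf p)

/-- good points -/
def Good (p : ℝ × ℝ) : Prop :=
  0 < (1 + p.2)^2 - 4 * p.1 * p.2 ∧ 0 < 1 + p.2 + Qf p ∧ 0 < 1 - p.2 * sf p ∧ |sf p| < 1 ∧ |wf p| < 1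

lemma Qf_an {p : ℝ × ℝ} (h : 0 < (1 + p.2)^2 - 4 * p.1 * p.2) : AnalyticAt ℝ Qf p := by
  have h5 : AnalyticAt ℝ (fun p : ℝ × ℝ => p.1) p := analyticAt_fst
  have h6 : AnalyticAt ℝ (fun p : ℝ × ℝ => p.2) p := analyticAt_snd
  exact an_sqrt (f := fun p : ℝ × ℝ => (1 + p.2)^2 - 4 * p.1 * p.2) (by fun_prop) h

lemma sf_an {p : ℝ × ℝ} (h : 0 < (1 + p.2)^2 - 4 * p.1 * p.2) (h2 : 0 < 1 + p.2 + Qf p) :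
    AnalyticAt ℝ sf p := by
  have h5 : AnalyticAt ℝ (fun p : ℝ × ℝ => p.1) p := analyticAt_fst
  have h6 : AnalyticAt ℝ (fun p : ℝ × ℝ => p.2) p := analyticAt_snd
  have h7 := Qf_an h
  have h8 := h2.ne'
  unfold sf
  fun_prop (disch := assumption)

lemma wf_an {p : ℝ × ℝ} (h : 0 < (1 + p.2)^2 - 4 * p.1 * p.2) (h2 : 0 < 1 + p.2 + Qf p)
    (h3 : 0 < 1 - p.2 * sf p) : AnalyticAt ℝ wf p := by
  have h6 : AnalyticAt ℝ (fun p : ℝ × ℝ => p.2) p := analyticAt_snd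
  have h7 := sf_an h h2
  have h8 := h3.ne'
  unfold wf
  fun_prop (disch := assumption)

lemma Good_ev {p : ℝ × ℝ} (h : Good p) : ∀ᶠ q in 𝓝 p, Good q := by
  obtain ⟨h1, h2, h3, h4, h5⟩ := h
  have c1 := (Qf_an h1).continuousAt
  have c2 := (sf_an h1 h2).continuousAt
  have c3 := (wf_an h1 h2 h3).continuousAt
  have d1 : ContinuousAt (fun p : ℝ × ℝ => (1 + p.2)^2 - 4 * p.1 * p.2) p := by fun_prop
  have d2 : ContinuousAt (fun p : ℝ × ℝ => 1 + p.2 + Qf p) p := by fun_prop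
  have d3 : ContinuousAt (fun p : ℝ × ℝ => 1 - p.2 * sf p) p := by fun_prop
  filter_upwards [d1.eventually (eventually_gt_nhds h1), d2.eventually (eventually_gt_nhds h2),
    d3.eventually (eventually_gt_nhds h3), c2.abs.eventually (eventually_lt_nhds h4),
    c3.abs.eventually (eventually_lt_nhds h5)] with q e1 e2 e3 e4 e5 using ⟨e1, e2, e3, e4, e5⟩

lemma Good_zero {x : ℝ} (h : |x| < 1) : Good (x, 0) := by
  have hq : Qf (x, 0) = 1 := by simp [Qf]
  have hs : sf (x, 0) = x := by simp only [sf, hq]; ring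
  have hw : wf (x, 0) = 0 := by simp [wf]
  refine ⟨by norm_num, by rw [hq]; norm_num, by norm_num, by rwa [hs], by rw [hw]; norm_num⟩

lemma Good_rel {x t : ℝ} (h : Good (x, t)) :
    0 < Qf (x,t) ∧ t * sf (x,t) = (1 + t - Qf (x,t)) / 2 ∧
    x = sf (x,t) * (1 + t - t * sf (x,t)) ∧
    1 - sf (x,t) * wf (x,t) = 1 / (1 - t * sf (x,t)) ∧
    1 - wf (x,t) + wf (x,t) * sf (x,t) = Qf (x,t) / (1 - t * sf (x,t)) := by
  obtain ⟨h1, h2, h3, h4, h5⟩ := h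
  simp only at h1 h2 h3
  have hQ : 0 < Qf (x,t) := Real.sqrt_pos.2 h1
  have hQ2 : Qf (x,t) ^ 2 = (1+t)^2 - 4 * x * t := Real.sq_sqrt h1.le
  have e1 : t * sf (x,t) = (1 + t - Qf (x,t)) / 2 := by
    simp only [sf]
    field_simp
    linear_combination hQ2
  have e2 : x = sf (x,t) * (1 + t - t * sf (x,t)) := by
    rw [e1]
    simp only [sf]
    field_simp
    ring
  have e3 : 1 - sf (x,t) * wf (x,t) = 1 / (1 - t * sf (x,t)) := by
    simp only [wf]
    rw [eq_div_iff h3.ne', sub_mul, mul_assoc, div_mul_cancel₀ _ h3.ne']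
    ring
  refine ⟨hQ, e1, e2, e3, ?_⟩
  have : wf (x,t) = - t / (1 - t * sf (x,t)) := rfl
  rw [this]
  field_simp
  linear_combination (-2) * e1

lemma Q_x {x t : ℝ} (h : Good (x, t)) :
    HasDerivAt (fun y => Qf (y, t)) (-2 * t / Qf (x,t)) x := by
  have h1 := h.1
  have := (((hasDerivAt_id x).const_mul 4).mul_const t).const_sub ((1+t)^2)
  have := this.sqrt (by simpa using h1.ne')
  refine this.congr_deriv ?_
  have hQ := (Good_rel h).1
  simp only [Qf, id] at hQ ⊢
  field_simp
  ring

lemma Q_t {x t : ℝ} (h : Good (x, t)) :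
    HasDerivAt (fun y => Qf (x, y)) ((1 + t - 2 * x) / Qf (x,t)) t := by
  have h1 := h.1
  have := (((hasDerivAt_id t).const_add 1).pow 2).sub ((hasDerivAt_id t).const_mul (4*x))
  have := this.sqrt (by simpa using h1.ne')
  refine this.congr_deriv ?_
  have hQ := (Good_rel h).1
  simp only [Qf, id, Pi.sub_apply, Pi.pow_apply] at hQ ⊢
  field_simp
  ring

lemma s_x {x t : ℝ} (h : Good (x, t)) :
    HasDerivAt (fun y => sf (y, t)) (1 / Qf (x,t)) x := by
  have hQ2 : Qf (x,t) ^ 2 = (1+t)^2 - 4 * x * t := Real.sq_sqrt h.1.le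
  have hQ := (Good_rel h).1
  have h2 := h.2.1
  simp only at h2
  have := ((hasDerivAt_id x).const_mul 2).div ((Q_x h).const_add (1+t)) h2.ne'
  refine this.congr_deriv ?_
  simp only [id]
  field_simp
  linear_combination hQ2

lemma s_t {x t : ℝ} (h : Good (x, t)) :
    HasDerivAt (fun y => sf (x, y)) (-(sf (x,t) * (1 - sf (x,t))) / Qf (x,t)) t := by
  have hQ := (Good_rel h).1
  have h2 := h.2.1
  simp only at h2
  have := (hasDerivAt_const t (2*x)).div (((hasDerivAt_id t).const_add 1).add (Q_t h)) h2.ne'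
  refine this.congr_deriv ?_
  simp only [id, Pi.add_apply, sf]
  field_simp
  ring

lemma w_x {x t : ℝ} (h : Good (x, t)) :
    HasDerivAt (fun y => wf (y, t)) (-(wf (x,t))^2 / Qf (x,t)) x := by
  have hQ := (Good_rel h).1
  have h3 := h.2.2.1
  simp only at h3
  have := (hasDerivAt_const x (-t)).div (((s_x h).const_mul t).const_sub 1) h3.ne'
  refine this.congr_deriv ?_
  simp only [wf]
  field_simp
  ring

lemma w_t {x t : ℝ} (h : Good (x, t)) :
    HasDerivAt (fun y => wf (x, y)) (-(1 - wf (x,t)) / Qf (x,t)) t := by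
  obtain ⟨hQ, e1, -, -, -⟩ := Good_rel h
  have h3 := h.2.2.1
  simp only at h3
  have := (hasDerivAt_id t).neg.div (((hasDerivAt_id t).mul (s_t h)).const_sub 1) h3.ne'
  refine this.congr_deriv ?_
  simp only [wf, id, Pi.neg_apply, Pi.mul_apply]
  field_simp
  linear_combination (-2) * e1

/-- the separated product -/
def RF (A B C : ℝ) (p : ℝ × ℝ) : ℝ :=
  (1 - sf p * wf p) ^ A * (hyp A B C (sf p) * hyp A (C-B) (A-B+1) (wf p))

lemma k_pos {x t : ℝ} (h : Good (x,t)) : 0 < 1 - sf (x,t) * wf (x,t) := by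
  rw [(Good_rel h).2.2.2.1]
  exact one_div_pos.2 h.2.2.1

lemma q_pos {x t : ℝ} (h : Good (x,t)) : 0 < 1 - wf (x,t) + wf (x,t) * sf (x,t) := by
  rw [(Good_rel h).2.2.2.2]
  exact div_pos (Good_rel h).1 h.2.2.1

lemma RF_an {A B C : ℝ} {p : ℝ × ℝ} (h : Good p) : AnalyticAt ℝ (RF A B C) p := by
  obtain ⟨x, t⟩ := p
  have hk := k_pos h
  obtain ⟨h1, h2, h3, h4, h5⟩ := h
  have s1 := sf_an h1 h2
  have w1 := wf_an h1 h2 h3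
  have a1 := (hyp_analyticAt A B C h4).fun_comp s1
  have a2 := (hyp_analyticAt A (C-B) (A-B+1) h5).fun_comp w1
  exact (an_rpow (f := fun p => 1 - sf p * wf p) (by fun_prop) hk A).mul (a1.mul a2)

lemma kA_deriv {A : ℝ} {σ ω : ℝ → ℝ} {y s' w' : ℝ} (hs : HasDerivAt σ s' y) (hw : HasDerivAt ω w' y)
    (hk : 0 < 1 - σ y * ω y) :
    HasDerivAt (fun u => (1 - σ u * ω u) ^ A)
      (A * (1 - σ y * ω y)^A / (1 - σ y * ω y) * (-(s' * ω y + σ y * w'))) y := by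
  have := ((hs.mul hw).const_sub 1).rpow_const (p := A) (Or.inl hk.ne')
  refine this.congr_deriv ?_
  simp only [Pi.mul_apply]
  rw [Real.rpow_sub_one hk.ne']
  ring

lemma R_deriv {A : ℝ} {f g σ ω : ℝ → ℝ} {y s' w' : ℝ} (hs : HasDerivAt σ s' y)
    (hw : HasDerivAt ω w' y) (hk : 0 < 1 - σ y * ω y)
    (hf : AnalyticAt ℝ f (σ y)) (hg : AnalyticAt ℝ g (ω y)) :
    HasDerivAt (fun u => (1 - σ u * ω u) ^ A * (f (σ u) * g (ω u)))
      (A * (1 - σ y * ω y)^A / (1 - σ y * ω y) * (-(s' * ω y + σ y * w')) * (f (σ y) * g (ω y))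
        + (1 - σ y * ω y)^A * (deriv f (σ y) * s' * g (ω y) + f (σ y) * (deriv g (ω y) * w'))) y :=
  (kA_deriv hs hw hk).mul ((hf.differentiableAt.hasDerivAt.comp y hs).mul
    (hg.differentiableAt.hasDerivAt.comp y hw))

lemma X_deriv {A : ℝ} {f g σ ω : ℝ → ℝ} {y s' w' : ℝ} (hs : HasDerivAt σ s' y)
    (hw : HasDerivAt ω w' y) (hk : 0 < 1 - σ y * ω y) (hq : 1 - ω y + ω y * σ y ≠ 0)
    (hf : AnalyticAt ℝ f (σ y)) (hg : AnalyticAt ℝ g (ω y)) :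
    HasDerivAt (fun u => (1 - σ u * ω u) ^ A * ((1 - σ u * ω u) / (1 - ω u + ω u * σ u)
        * (deriv f (σ u) * g (ω u) - ω u ^ 2 * (f (σ u) * deriv g (ω u))
          - A * (ω u * (f (σ u) * g (ω u))))))
      (A * (1 - σ y * ω y)^A / (1 - σ y * ω y) * (-(s' * ω y + σ y * w'))
        * ((1 - σ y * ω y) / (1 - ω y + ω y * σ y)
        * (deriv f (σ y) * g (ω y) - ω y ^ 2 * (f (σ y) * deriv g (ω y))
          - A * (ω y * (f (σ y) * g (ω y)))))
        + (1 - σ y * ω y)^A * (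
          ((-(s' * ω y + σ y * w')) * (1 - ω y + ω y * σ y)
            - (1 - σ y * ω y) * (-w' + (w' * σ y + ω y * s'))) / (1 - ω y + ω y * σ y)^2
          * (deriv f (σ y) * g (ω y) - ω y ^ 2 * (f (σ y) * deriv g (ω y))
            - A * (ω y * (f (σ y) * g (ω y))))
          + (1 - σ y * ω y) / (1 - ω y + ω y * σ y)
          * ((deriv (deriv f) (σ y) * s') * g (ω y) + deriv f (σ y) * (deriv g (ω y) * w')
            - (2 * ω y * w' * (f (σ y) * deriv g (ω y))
              + ω y ^ 2 * (deriv f (σ y) * s' * deriv g (ω y)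
                + f (σ y) * (deriv (deriv g) (ω y) * w')))
            - A * (w' * (f (σ y) * g (ω y)) + ω y * (deriv f (σ y) * s' * g (ω y)
                + f (σ y) * (deriv g (ω y) * w')))))) y := by
  have f0 := hf.differentiableAt.hasDerivAt.comp y hs
  have f1 := hf.deriv.differentiableAt.hasDerivAt.comp y hs
  have g0 := hg.differentiableAt.hasDerivAt.comp y hw
  have g1 := hg.deriv.differentiableAt.hasDerivAt.comp y hw
  have K := (((hs.mul hw).const_sub 1).div ((hw.const_sub 1).add (hw.mul hs)) hq).mul
    (((f1.mul g0).sub ((hw.pow 2).mul (f0.mul g1))).sub ((hw.mul (f0.mul g0)).const_mul A))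
  have := (kA_deriv (A := A) hs hw hk).mul K
  refine this.congr_deriv ?_
  simp only [Pi.mul_apply, Pi.add_apply, Pi.sub_apply, Pi.pow_apply, Pi.div_apply, Function.comp]
  ring

lemma T_deriv {A : ℝ} {f g σ ω : ℝ → ℝ} {y s' w' : ℝ} (hs : HasDerivAt σ s' y)
    (hw : HasDerivAt ω w' y) (hk : 0 < 1 - σ y * ω y) (hq : 1 - ω y + ω y * σ y ≠ 0)
    (hf : AnalyticAt ℝ f (σ y)) (hg : AnalyticAt ℝ g (ω y)) :
    HasDerivAt (fun u => (1 - σ u * ω u) ^ A * ((1 - σ u * ω u) / (1 - ω u + ω u * σ u)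
        * (A * (σ u * (f (σ u) * g (ω u))) - σ u * (1 - σ u) * (deriv f (σ u) * g (ω u))
          - (1 - ω u) * (f (σ u) * deriv g (ω u)))))
      (A * (1 - σ y * ω y)^A / (1 - σ y * ω y) * (-(s' * ω y + σ y * w'))
        * ((1 - σ y * ω y) / (1 - ω y + ω y * σ y)
        * (A * (σ y * (f (σ y) * g (ω y))) - σ y * (1 - σ y) * (deriv f (σ y) * g (ω y))
          - (1 - ω y) * (f (σ y) * deriv g (ω y))))
        + (1 - σ y * ω y)^A * (
          ((-(s' * ω y + σ y * w')) * (1 - ω y + ω y * σ y)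
            - (1 - σ y * ω y) * (-w' + (w' * σ y + ω y * s'))) / (1 - ω y + ω y * σ y)^2
          * (A * (σ y * (f (σ y) * g (ω y))) - σ y * (1 - σ y) * (deriv f (σ y) * g (ω y))
            - (1 - ω y) * (f (σ y) * deriv g (ω y)))
          + (1 - σ y * ω y) / (1 - ω y + ω y * σ y)
          * (A * (s' * (f (σ y) * g (ω y)) + σ y * (deriv f (σ y) * s' * g (ω y)
                + f (σ y) * (deriv g (ω y) * w')))
             - ((s' * (1 - σ y) - σ y * s') * (deriv f (σ y) * g (ω y))
               + σ y * (1 - σ y) * (deriv (deriv f) (σ y) * s' * g (ω y)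
                 + deriv f (σ y) * (deriv g (ω y) * w')))
             - (-w' * (f (σ y) * deriv g (ω y)) + (1 - ω y) * (deriv f (σ y) * s' * deriv g (ω y)
                + f (σ y) * (deriv (deriv g) (ω y) * w')))))) y := by
  have f0 := hf.differentiableAt.hasDerivAt.comp y hs
  have f1 := hf.deriv.differentiableAt.hasDerivAt.comp y hs
  have g0 := hg.differentiableAt.hasDerivAt.comp y hw
  have g1 := hg.deriv.differentiableAt.hasDerivAt.comp y hw
  have K := (((hs.mul hw).const_sub 1).div ((hw.const_sub 1).add (hw.mul hs)) hq).mul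
    ((((hs.mul (f0.mul g0)).const_mul A).sub ((hs.mul (hs.const_sub 1)).mul (f1.mul g0))).sub
      ((hw.const_sub 1).mul (f0.mul g1)))
  have := (kA_deriv (A := A) hs hw hk).mul K
  refine this.congr_deriv ?_
  simp only [Pi.mul_apply, Pi.add_apply, Pi.sub_apply, Pi.div_apply, Function.comp]
  ring

lemma rel_aux (s t u : ℝ) (hu : u ≠ 0) (h : u = 1 - t * s) :
    s * (1 + t - t * s) = s * (1 - -t / u) / (1 / u) := by
  field_simp
  rw [h]; ring

lemma rel_more {x t : ℝ} (h : Good (x,t)) :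
    1 / Qf (x,t) = (1 - sf (x,t) * wf (x,t)) / (1 - wf (x,t) + wf (x,t) * sf (x,t)) ∧
    t = - wf (x,t) / (1 - sf (x,t) * wf (x,t)) ∧
    x = sf (x,t) * (1 - wf (x,t)) / (1 - sf (x,t) * wf (x,t)) := by
  obtain ⟨hQ, e1, e2, e3, e4⟩ := Good_rel h
  have h3 := h.2.2.1
  simp only at h3
  refine ⟨?_, ?_, ?_⟩
  · rw [e3, e4]; field_simp
  · rw [e3, wf]; field_simp
  · rw [e3]
    conv_lhs => rw [e2]
    exact rel_aux _ _ _ h3.ne' rfl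

set_option maxRecDepth 20000 in
set_option maxHeartbeats 1000000 in
lemma pde_alg (A B C s w K f0 f1 f2 g0 g1 g2 : ℝ) (hk : 1 - s * w ≠ 0) (hq : 1 - w + w * s ≠ 0)
    (hf : s * (1 - s) * f2 + (C - (A + B + 1) * s) * f1 - A * B * f0 = 0)
    (hg : w * (1 - w) * g2 + (A - B + 1 - (A + (C - B) + 1) * w) * g1 - A * (C - B) * g0 = 0)
    (x t i s1 w1 s2 w2 X XX T TT : ℝ)
    (hi : i = (1 - s * w) / (1 - w + w * s))
    (hx : x = s * (1 - w) / (1 - s * w)) (ht : t = - w / (1 - s * w))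
    (hs1 : s1 = i) (hw1 : w1 = -w^2 * i) (hs2 : s2 = -(s * (1-s)) * i) (hw2 : w2 = -(1-w) * i)
    (hX : X = K * ((1 - s * w) / (1 - w + w * s)
        * (f1 * g0 - w ^ 2 * (f0 * g1) - A * (w * (f0 * g0)))))
    (hT : T = K * ((1 - s * w) / (1 - w + w * s)
        * (A * (s * (f0 * g0)) - s * (1 - s) * (f1 * g0) - (1 - w) * (f0 * g1))))
    (hXX : XX = A * K / (1 - s * w) * (-(s1 * w + s * w1))
        * ((1 - s * w) / (1 - w + w * s)
        * (f1 * g0 - w ^ 2 * (f0 * g1) - A * (w * (f0 * g0))))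
        + K * (
          ((-(s1 * w + s * w1)) * (1 - w + w * s)
            - (1 - s * w) * (-w1 + (w1 * s + w * s1))) / (1 - w + w * s)^2
          * (f1 * g0 - w ^ 2 * (f0 * g1) - A * (w * (f0 * g0)))
          + (1 - s * w) / (1 - w + w * s)
          * ((f2 * s1) * g0 + f1 * (g1 * w1)
            - (2 * w * w1 * (f0 * g1) + w ^ 2 * (f1 * s1 * g1 + f0 * (g2 * w1)))
            - A * (w1 * (f0 * g0) + w * (f1 * s1 * g0 + f0 * (g1 * w1))))))
    (hTT : TT = A * K / (1 - s * w) * (-(s2 * w + s * w2))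
        * ((1 - s * w) / (1 - w + w * s)
        * (A * (s * (f0 * g0)) - s * (1 - s) * (f1 * g0) - (1 - w) * (f0 * g1)))
        + K * (
          ((-(s2 * w + s * w2)) * (1 - w + w * s)
            - (1 - s * w) * (-w2 + (w2 * s + w * s2))) / (1 - w + w * s)^2
          * (A * (s * (f0 * g0)) - s * (1 - s) * (f1 * g0) - (1 - w) * (f0 * g1))
          + (1 - s * w) / (1 - w + w * s)
          * (A * (s2 * (f0 * g0) + s * (f1 * s2 * g0 + f0 * (g1 * w2)))
             - ((s2 * (1 - s) - s * s2) * (f1 * g0)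
               + s * (1 - s) * (f2 * s2 * g0 + f1 * (g1 * w2)))
             - (-w2 * (f0 * g1) + (1 - w) * (f1 * s2 * g1 + f0 * (g2 * w2)))))) :
    x * (1 - x) * XX + (C - (A + B + 1) * x) * X
      - (A * B * (K * (f0 * g0)) + (B - A) * (t * T) - (t ^ 2 * TT + t * T)) = 0 := by
  have key : x * (1 - x) * XX + (C - (A + B + 1) * x) * X
      - (A * B * (K * (f0 * g0)) + (B - A) * (t * T) - (t ^ 2 * TT + t * T))
      = K * (1 - s * w) / (1 - w + w * s) * g0
          * (s * (1 - s) * f2 + (C - (A + B + 1) * s) * f1 - A * B * f0)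
        + K * w * (1 - s * w) / (1 - w + w * s) * f0 *
          (w * (1 - w) * g2 + (A - B + 1 - (A + (C - B) + 1) * w) * g1 - A * (C - B) * g0) := by
    subst hXX hTT hX hT
    subst hs1 hw1 hs2 hw2
    subst hi hx ht
    obtain ⟨k, hkk⟩ : ∃ k, k = 1 - s * w := ⟨_, rfl⟩
    obtain ⟨q, hqq⟩ : ∃ q, q = 1 - w + w * s := ⟨_, rfl⟩
    rw [← hkk] at hk ⊢
    rw [← hqq] at hq ⊢
    field_simp
    rw [hkk, hqq]
    ring
  rw [key, hf, hg]; ring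

lemma Dx_RF {A B C x t : ℝ} (h : Good (x,t)) : Dx (RF A B C) (x,t) =
    (1 - sf (x,t) * wf (x,t)) ^ A * ((1 - sf (x,t) * wf (x,t)) / (1 - wf (x,t) + wf (x,t) * sf (x,t))
        * (deriv (hyp A B C) (sf (x,t)) * hyp A (C-B) (A-B+1) (wf (x,t))
          - wf (x,t) ^ 2 * (hyp A B C (sf (x,t)) * deriv (hyp A (C-B) (A-B+1)) (wf (x,t)))
          - A * (wf (x,t) * (hyp A B C (sf (x,t)) * hyp A (C-B) (A-B+1) (wf (x,t)))))) := by
  have hk := k_pos h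
  have hq := q_pos h
  obtain ⟨hi, -, -⟩ := rel_more h
  have h1 := R_deriv (A := A) (s_x h) (w_x h) hk (hyp_analyticAt A B C h.2.2.2.1)
    (hyp_analyticAt A (C-B) (A-B+1) h.2.2.2.2)
  rw [(slice_x (RF_an h)).unique h1]
  rw [div_eq_mul_one_div (-(wf (x,t))^2), hi]
  field_simp
  ring

lemma Dt_RF {A B C x t : ℝ} (h : Good (x,t)) : Dt (RF A B C) (x,t) =
    (1 - sf (x,t) * wf (x,t)) ^ A * ((1 - sf (x,t) * wf (x,t)) / (1 - wf (x,t) + wf (x,t) * sf (x,t))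
        * (A * (sf (x,t) * (hyp A B C (sf (x,t)) * hyp A (C-B) (A-B+1) (wf (x,t))))
          - sf (x,t) * (1 - sf (x,t))
            * (deriv (hyp A B C) (sf (x,t)) * hyp A (C-B) (A-B+1) (wf (x,t)))
          - (1 - wf (x,t)) * (hyp A B C (sf (x,t)) * deriv (hyp A (C-B) (A-B+1)) (wf (x,t))))) := by
  have hk := k_pos h
  have hq := q_pos h
  obtain ⟨hi, -, -⟩ := rel_more h
  have h1 := R_deriv (A := A) (s_t h) (w_t h) hk (hyp_analyticAt A B C h.2.2.2.1)
    (hyp_analyticAt A (C-B) (A-B+1) h.2.2.2.2)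
  rw [(slice_t (RF_an h)).unique h1]
  rw [div_eq_mul_one_div (-(1 - wf (x,t))), div_eq_mul_one_div (-(sf (x,t) * (1 - sf (x,t)))), hi]
  field_simp
  ring

lemma PD_RF {A B C x t : ℝ} (hC : ∀ m : ℕ, C ≠ -(m:ℝ)) (hE : ∀ m : ℕ, A - B + 1 ≠ -(m:ℝ))
    (h : Good (x,t)) : PD A B C (RF A B C) (x,t) = 0 := by
  have hk := k_pos h
  have hq := q_pos h
  obtain ⟨hi, ht, hx⟩ := rel_more h
  have fa := hyp_analyticAt A B C h.2.2.2.1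
  have ga := hyp_analyticAt A (C-B) (A-B+1) h.2.2.2.2
  have cx : ContinuousAt (fun y : ℝ => (y, t)) x := by fun_prop
  have ct : ContinuousAt (fun y : ℝ => (x, y)) t := by fun_prop
  have hX := X_deriv (A := A) (s_x h) (w_x h) hk hq.ne' fa ga
  have hT := T_deriv (A := A) (s_t h) (w_t h) hk hq.ne' fa ga
  have e1 := (slice_x (Dx_an (RF_an (A := A) (B := B) (C := C) h))).congr_of_eventuallyEq
    (f₁ := fun u => _) (by
      filter_upwards [cx.eventually (Good_ev h)] with y hy using (Dx_RF hy).symm)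
  have e2 := (slice_t (Dt_an (RF_an (A := A) (B := B) (C := C) h))).congr_of_eventuallyEq
    (f₁ := fun u => _) (by
      filter_upwards [ct.eventually (Good_ev h)] with y hy using (Dt_RF hy).symm)
  exact pde_alg A B C (sf (x,t)) (wf (x,t)) _ _ _ _ _ _ _ hk.ne' hq.ne'
    (hyp_ode hC h.2.2.2.1) (hyp_ode hE h.2.2.2.2) x t (1 / Qf (x,t)) _ _ _ _
    _ _ _ _ hi hx ht rfl (div_eq_mul_one_div _ _) (div_eq_mul_one_div _ _) (div_eq_mul_one_div _ _)
    (Dx_RF h) (Dt_RF h) (e1.unique hX) (e2.unique hT)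

lemma poch_succ' (a : ℝ) (n : ℕ) : poch a (n+1) = a * poch (a+1) n := by
  simp only [poch, Finset.prod_range_succ']
  rw [mul_comm]
  congr 1
  · simp
  · refine Finset.prod_congr rfl fun i _ => ?_
    push_cast; ring

lemma hyp_symm (a b c x : ℝ) : hyp a b c x = hyp b a c x := by
  unfold hyp
  refine tsum_congr fun k => ?_
  rw [mul_comm (poch a k)]

lemma hyp_deriv {a b c : ℝ} (hc : ∀ m : ℕ, c ≠ -(m:ℝ)) {z : ℝ} (hz : |z| < 1) :
    deriv (hyp a b c) z = a * b / c * hyp (a+1) (b+1) (c+1) z := by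
  have hc1 : ∀ m : ℕ, c + 1 ≠ -(m:ℝ) := fun m h => hc (m+1) (by push_cast; linarith)
  have hc0 : c ≠ 0 := by simpa using hc 0
  have an : AnalyticOnNhd ℝ (deriv (hyp a b c)) (Metric.ball 0 1) := fun w hw =>
    (hyp_analyticAt a b c (by simpa using hw)).deriv
  have an2 : AnalyticOnNhd ℝ (fun z => a * b / c * hyp (a+1) (b+1) (c+1) z) (Metric.ball 0 1) :=
    fun w hw => by
      have := (hyp_analyticAt (a+1) (b+1) (c+1) (z := w) (by simpa using hw))
      fun_prop
  refine an.eqOn_of_preconnected_of_eventuallyEq an2 ball_preconn (z₀ := 0) (by simp) ?_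
    (by simpa using hz)
  refine eq_of_iter (an 0 (by simp)) (an2 0 (by simp)) fun n => ?_
  rw [← iteratedDeriv_succ', iteratedDeriv_const_mul_field, iter_of_fps (hyp_fps _ _ _),
    iter_of_fps (hyp_fps _ _ _)]
  simp only [hco, poch_succ', Nat.factorial_succ]
  have := poch_ne (c+1) hc1 n
  have h4 : (n.factorial:ℝ) ≠ 0 := by positivity
  have h5 : (n:ℝ)+1 ≠ 0 := by positivity
  push_cast
  field_simp

lemma poch_bound {a M : ℝ} {n : ℕ} (h : ∀ i : ℕ, |a + i| ≤ n * (M + i)) (k : ℕ) :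
    |poch a k| ≤ (n:ℝ)^k * poch M k := by
  unfold poch
  rw [Finset.abs_prod]
  calc _ ≤ ∏ i ∈ Finset.range k, ((n:ℝ) * (M + i)) :=
        Finset.prod_le_prod (fun i _ => abs_nonneg _) (fun i _ => h i)
    _ = _ := by rw [Finset.prod_mul_distrib]; simp

lemma start_bound (A B C : ℝ) : ∃ S : ℝ, ∀ n : ℕ, 1 ≤ n →
    |hyp (A+n) (B-n) C (1/(4*(n:ℝ)^2))| ≤ S := by
  refine ⟨∑' k, |hco (1+|A|) (1+|B|) C k| * |(1/4:ℝ)|^k, fun n hn => ?_⟩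
  have hn' : (1:ℝ) ≤ n := by exact_mod_cast hn
  have hs := (hco_summable (1+|A|) (1+|B|) C (z := 1/4) (by norm_num [abs_lt])).hasSum
  unfold hyp
  rw [← Real.norm_eq_abs]
  refine tsum_of_norm_bounded hs fun k => ?_
  have b1 := poch_bound (a := A+n) (M := 1+|A|) (n := n) (fun i => by
    have h1 : |A + n + i| ≤ |A| + n + i := by
      refine (abs_add_le _ _).trans ?_
      refine (add_le_add_left (abs_add_le _ _) _).trans ?_
      simp
    refine h1.trans ?_
    have : 0 ≤ ((n:ℝ)-1) * (|A| + i) := mul_nonneg (by linarith) (by positivity)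
    nlinarith) k
  have b2 := poch_bound (a := B-n) (M := 1+|B|) (n := n) (fun i => by
    have h1 : |B - n + i| ≤ |B| + n + i := by
      refine (abs_add_le _ _).trans ?_
      refine (add_le_add_left (abs_sub _ _) _).trans ?_
      simp
    refine h1.trans ?_
    have : 0 ≤ ((n:ℝ)-1) * (|B| + i) := mul_nonneg (by linarith) (by positivity)
    nlinarith) k
  have p1 : 0 ≤ poch (1+|A|) k := Finset.prod_nonneg fun i _ => by positivity
  have p2 : 0 ≤ poch (1+|B|) k := Finset.prod_nonneg fun i _ => by positivity
  have b3 := mul_le_mul b1 b2 (abs_nonneg _) (by positivity)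
  rw [Real.norm_eq_abs, abs_mul, abs_div, abs_mul, hco, abs_div, abs_mul (poch (1+|A|) k),
    abs_of_nonneg p1, abs_of_nonneg p2, abs_pow]
  calc _ ≤ ((n:ℝ)^k * poch (1+|A|) k * ((n:ℝ)^k * poch (1+|B|) k)) / |poch C k * k.factorial|
        * |1/(4*(n:ℝ)^2)|^k := by gcongr
    _ = _ := by
      rw [abs_of_pos (by positivity : (0:ℝ) < 1/(4*(n:ℝ)^2)), abs_of_pos (by norm_num : (0:ℝ) < 1/4)]
      rw [one_div_pow, one_div_pow, mul_pow, ← pow_mul, mul_comm 2 k, pow_mul]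
      have : (n:ℝ)^k ≠ 0 := by positivity
      field_simp

/-- the energy -/
def En (a b c z : ℝ) : ℝ :=
  hyp a b c z ^ 2 + z * (1 - z) * (deriv (hyp a b c) z)^2 / (-(a*b))

lemma En_deriv {a b c : ℝ} (hc : ∀ m : ℕ, c ≠ -(m:ℝ)) (hl : 0 < -(a*b)) {z : ℝ} (hz : |z| < 1) :
    HasDerivAt (En a b c) ((deriv (hyp a b c) z)^2 / (-(a*b))
      * (1 - 2 * z - 2 * c + 2 * (a+b+1) * z)) z := by
  have h := hyp_analyticAt a b c hz
  have h0 := h.differentiableAt.hasDerivAt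
  have h1 := h.deriv.differentiableAt.hasDerivAt
  have hid := hasDerivAt_id z
  have ho := hyp_ode (a := a) (b := b) hc hz
  have := (h0.pow 2).add (((hid.mul (hid.const_sub 1)).mul (h1.pow 2)).div_const (-(a*b)))
  refine this.congr_deriv ?_
  simp only [id, Pi.mul_apply, Pi.pow_apply]
  unfold Hop at ho
  have hl' := hl.ne'
  generalize hyp a b c z = y at *
  generalize deriv (hyp a b c) z = y1 at *
  generalize deriv (deriv (hyp a b c)) z = y2 at *
  obtain ⟨l, hll⟩ : ∃ l, l = -(a*b) := ⟨_, rfl⟩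
  rw [← hll] at hl' ⊢
  have hab : a * b = -l := by rw [hll]; ring
  rw [hab] at ho
  field_simp
  push_cast
  linear_combination 2 * y1 * ho

lemma En_decay {a b c x x0 : ℝ} (hc : ∀ m : ℕ, c ≠ -(m:ℝ)) (hl : 0 < -(a*b)) (hx0 : 0 < x0)
    (hx : x < 1) (h01 : x0 ≤ x) (m : ℕ)
    (hm : 3 + 2 * |c| + 2 * |a+b+1| ≤ (m+1) * (1 - x)) :
    En a b c x / x^(m+1) ≤ En a b c x0 / x0^(m+1) := by
  have hd : ∀ z ∈ Set.Icc x0 x, HasDerivAt (fun z => En a b c z / z^(m+1))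
      (((deriv (hyp a b c) z)^2 / (-(a*b)) * (1 - 2 * z - 2 * c + 2 * (a+b+1) * z) * z^(m+1)
        - En a b c z * ((m+1) * z^m)) / (z^(m+1))^2) z := by
    intro z hz
    have z0 : 0 < z := lt_of_lt_of_le hx0 hz.1
    have z1 : z < 1 := lt_of_le_of_lt hz.2 hx
    have := (En_deriv (a := a) (b := b) hc hl (z := z) (by rw [abs_of_pos z0]; exact z1)).div
      (hasDerivAt_pow (m+1) z) (by positivity)
    refine this.congr_deriv ?_
    push_cast
    simp
  have anti : AntitoneOn (fun z => En a b c z / z^(m+1)) (Set.Icc x0 x) := by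
    apply antitoneOn_of_deriv_nonpos (convex_Icc _ _)
    · exact fun z hz => (hd z hz).continuousAt.continuousWithinAt
    · exact fun z hz => (hd z (interior_subset hz)).differentiableAt.differentiableWithinAt
    · intro z hz
      have hz := interior_subset hz
      rw [(hd z hz).deriv]
      have z0 : 0 < z := lt_of_lt_of_le hx0 hz.1
      have z1 : z < 1 := lt_of_le_of_lt hz.2 hx
      apply div_nonpos_of_nonpos_of_nonneg _ (by positivity)
      set D := (deriv (hyp a b c) z)^2 / (-(a*b)) with hD
      have hD0 : 0 ≤ D := by positivity
      have hE : z * (1 - x) * D ≤ En a b c z := by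
        unfold En
        have : z * (1 - z) * (deriv (hyp a b c) z)^2 / (-(a*b)) = z * (1 - z) * D := by
          rw [hD]; ring
        rw [this]
        have : z * (1 - x) * D ≤ z * (1 - z) * D := by
          have := hz.2
          gcongr
        nlinarith [sq_nonneg (hyp a b c z)]
      have hM : 1 - 2 * z - 2 * c + 2 * (a+b+1) * z ≤ (m+1) * (1-x) := by
        refine le_trans ?_ hm
        have e1 : -c ≤ |c| := neg_le_abs c
        have e2 : (a+b+1) * z ≤ |a+b+1| := by
          calc (a+b+1)*z ≤ |a+b+1| * z := by gcongr; exact le_abs_self _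
            _ ≤ |a+b+1| * 1 := by gcongr
            _ = _ := mul_one _
        linarith
      have k1 : D * (1 - 2 * z - 2 * c + 2 * (a+b+1) * z) * z ≤ (m+1) * En a b c z := by
        calc D * (1 - 2 * z - 2 * c + 2 * (a+b+1) * z) * z ≤ D * ((m+1) * (1-x)) * z := by gcongr
          _ = (m+1) * (z * (1-x) * D) := by ring
          _ ≤ _ := by gcongr
      have zm : 0 ≤ z^m := by positivity
      have := mul_le_mul_of_nonneg_right k1 zm
      rw [pow_succ]
      nlinarith
  exact anti ⟨le_rfl, h01⟩ ⟨h01, le_rfl⟩ h01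

lemma E0_bound {A B C n x0 S S' : ℝ} (hC : ∀ m : ℕ, C ≠ -(m:ℝ)) (hC0 : C ≠ 0) (hn1 : 1 ≤ n)
    (pA : 0 < A + n) (pB : 0 < n - B) (hx0d : x0 = 1/(4*n^2)) (x00 : 0 < x0) (x01 : x0 < 1)
    (hS : |hyp (A+n) (B-n) C x0| ≤ S) (hS' : |hyp (A+n+1) (B-n+1) (C+1) x0| ≤ S') :
    En (A+n) (B-n) C x0 ≤ S^2 + (1+|A|)*(1+|B|)/4 * S'^2 / C^2 := by
  unfold En
  have i1 : hyp (A+n) (B-n) C x0 ^ 2 ≤ S^2 := by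
    rw [← sq_abs]
    have := hS
    gcongr
  rw [hyp_deriv hC (by rw [abs_of_pos x00]; exact x01)]
  have i2 : hyp (A+n+1) (B-n+1) (C+1) x0 ^ 2 ≤ S'^2 := by
    rw [← sq_abs]
    have := hS'
    gcongr
  set v := hyp (A+n+1) (B-n+1) (C+1) x0
  have i3 : x0 * (1 - x0) * ((A+n)*(B-n)/C*v)^2 / (-((A+n)*(B-n)))
      = (1 - x0) * ((A+n)*(n-B)*x0) * v^2 / C^2 := by
    have : (B - n) ≠ 0 := by linarith
    field_simp
    ring
  have i4 : (A+n)*(n-B)*x0 ≤ (1+|A|)*(1+|B|)/4 := by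
    have j1 : A + n ≤ (1+|A|)*n := by nlinarith [le_abs_self A, abs_nonneg A]
    have j2 : n - B ≤ (1+|B|)*n := by nlinarith [neg_abs_le B, abs_nonneg B]
    have j3 : (A+n)*(n-B) ≤ ((1+|A|)*n) * ((1+|B|)*n) := by gcongr
    calc (A+n)*(n-B)*x0 ≤ ((1+|A|)*n) * ((1+|B|)*n) * x0 := by gcongr
      _ = _ := by rw [hx0d]; field_simp
  have i5 : (1 - x0) * ((A+n)*(n-B)*x0) ≤ (1+|A|)*(1+|B|)/4 := by
    have : 0 ≤ (A+n)*(n-B)*x0 := by positivity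
    nlinarith
  rw [i3]
  gcongr

set_option maxHeartbeats 1000000 in
lemma u_bound (A B C : ℝ) (hC : ∀ m : ℕ, C ≠ -(m:ℝ)) {x : ℝ} (hx0 : 0 < x) (hx1 : x < 1) :
    ∃ (K : ℝ) (m N : ℕ), ∀ n : ℕ, N ≤ n → |hyp (A+n) (B-n) C x| ≤ K * (n:ℝ)^m := by
  obtain ⟨S, hS⟩ := start_bound A B C
  obtain ⟨S', hS'⟩ := start_bound (A+1) (B+1) (C+1)
  obtain ⟨m, hm⟩ := exists_nat_ge ((3 + 2 * |C| + 2 * |A+B+1|) / (1 - x))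
  obtain ⟨N1, hN1⟩ := exists_nat_gt (|A| + |B| + 1 + 1/x)
  have hC0 : C ≠ 0 := by simpa using hC 0
  have h1x : 0 < 1 - x := by linarith
  rw [div_le_iff₀ h1x] at hm
  refine ⟨1 + 4^(m+1) * (S^2 + (1+|A|)*(1+|B|)/4 * S'^2 / C^2), 2*(m+1), N1, fun n hn => ?_⟩
  have hn' : |A| + |B| + 1 + 1/x < n := lt_of_lt_of_le hN1 (by exact_mod_cast hn)
  have hix : 0 < 1/x := by positivity
  have hA := abs_nonneg A
  have hB := abs_nonneg B
  have hn1 : (1:ℝ) ≤ n := by linarith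
  have hn1' : 1 ≤ n := by exact_mod_cast hn1
  have pA : 0 < A + n := by linarith [neg_abs_le A]
  have pB : 0 < n - B := by linarith [le_abs_self B]
  have hl : 0 < -((A+n)*(B-n)) := by nlinarith [mul_pos pA pB]
  set x0 : ℝ := 1/(4*(n:ℝ)^2) with hx0d
  have x00 : 0 < x0 := by positivity
  have hx0x : x0 ≤ x := by
    rw [hx0d, div_le_iff₀ (by positivity)]
    have h1 : 1/x < n := by linarith
    rw [div_lt_iff₀ hx0] at h1
    nlinarith
  have x01 : x0 < 1 := by linarith
  have dec := En_decay hC hl x00 hx1 hx0x m (by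
    rw [show A + n + (B - n) + 1 = A + B + 1 by ring]
    nlinarith)
  have hE0 := E0_bound (S' := S') hC hC0 hn1 pA pB hx0d x00 x01 (hS n hn1') (by
    have := hS' n hn1'
    rwa [show A + 1 + (n:ℝ) = A + n + 1 by ring, show B + 1 - (n:ℝ) = B - n + 1 by ring] at this)
  set E0 := S^2 + (1+|A|)*(1+|B|)/4 * S'^2 / C^2 with hE0d
  have hE00 : 0 ≤ E0 := by positivity
  have hu : hyp (A+n) (B-n) C x ^ 2 ≤ En (A+n) (B-n) C x := by
    unfold En
    have : 0 ≤ x * (1 - x) * (deriv (hyp (A+n) (B-n) C) x)^2 / (-((A+n)*(B-n))) := by positivity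
    linarith
  have hEx : En (A+n) (B-n) C x ≤ E0 * (4 * (n:ℝ)^2)^(m+1) := by
    rw [div_le_iff₀ (by positivity)] at dec
    have hpow : x^(m+1) ≤ 1 := pow_le_one₀ hx0.le hx1.le
    have q1 : En (A+n) (B-n) C x0 / x0^(m+1) = En (A+n) (B-n) C x0 * (4 * (n:ℝ)^2)^(m+1) := by
      rw [hx0d, one_div_pow]; field_simp
    rw [q1] at dec
    calc _ ≤ _ := dec
      _ ≤ E0 * (4 * (n:ℝ)^2)^(m+1) * x^(m+1) := by gcongr
      _ ≤ E0 * (4 * (n:ℝ)^2)^(m+1) * 1 := by gcongr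
      _ = _ := mul_one _
  have hp : (1:ℝ) ≤ (n:ℝ)^(2*(m+1)) := one_le_pow₀ hn1
  have e : E0 * (4 * (n:ℝ)^2)^(m+1) = 4^(m+1) * E0 * (n:ℝ)^(2*(m+1)) := by
    rw [mul_pow, ← pow_mul]; ring
  rw [e] at hEx
  have habs : |hyp (A+n) (B-n) C x| ≤ 1 + hyp (A+n) (B-n) C x ^ 2 := by
    rw [← sq_abs]
    nlinarith [sq_nonneg (|hyp (A+n) (B-n) C x| - 1), abs_nonneg (hyp (A+n) (B-n) C x)]
  rw [add_mul, one_mul]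
  exact habs.trans (add_le_add hp (hu.trans hEx))

lemma radius_lhs (A B C E : ℝ) (hC : ∀ m : ℕ, C ≠ -(m:ℝ)) {x : ℝ} (hx0 : 0 < x) (hx1 : x < 1) :
    1 ≤ (ofScalars ℝ (fun n : ℕ => (-1)^n * hco A (C-B) E n * hyp (A+n) (B-n) C x)).radius := by
  obtain ⟨K, m, N, hK⟩ := u_bound A B C hC hx0 hx1
  refine ENNReal.le_of_forall_nnreal_lt fun r hr => ?_
  have hr1 : (r:ℝ) < 1 := by exact_mod_cast hr
  obtain ⟨ρ, hρ1, hρ2⟩ := exists_between hr1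
  have hρ0 : 0 < ρ := lt_of_le_of_lt r.2 hρ1
  apply FormalMultilinearSeries.le_radius_of_tendsto (l := 0)
  have t1 := (hco_summable A (C-B) E (z := ρ) (by rw [abs_of_pos hρ0]; exact hρ2)).tendsto_atTop_zero
  have hq : |(r:ℝ)/ρ| < 1 := by
    rw [abs_of_nonneg (by positivity), div_lt_one hρ0]; exact hρ1
  have t2 := (tendsto_pow_const_mul_const_pow_of_abs_lt_one m hq).const_mul K
  have t3 := t1.mul t2
  simp only [mul_zero] at t3
  refine squeeze_zero' (Eventually.of_forall fun n => by positivity) ?_ t3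
  filter_upwards [eventually_ge_atTop N] with n hn
  rw [FormalMultilinearSeries.ofScalars_norm, Real.norm_eq_abs, abs_mul, abs_mul, abs_pow, abs_neg, abs_one, one_pow, one_mul,
    abs_of_pos hρ0]
  calc |hco A (C-B) E n| * |hyp (A+n) (B-n) C x| * (r:ℝ)^n
      ≤ |hco A (C-B) E n| * (K * (n:ℝ)^m) * (r:ℝ)^n := by
        have := hK n hn
        gcongr
    _ = _ := by rw [div_pow]; field_simp

lemma basic_rel {x t : ℝ} (hx0 : 0 < x) (hx1 : x < 1) (ht : |t| < 1) :
    0 < (1 + t)^2 - 4 * x * t ∧ 0 < 1 + t + Qf (x,t) ∧ 0 < sf (x,t) ∧ sf (x,t) < 1 ∧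
    0 < 1 - t * sf (x,t) ∧ x - t * sf (x,t) = sf (x,t) * (1 - t * sf (x,t)) ∧
    2 * (t * sf (x,t)) = 1 + t - Qf (x,t) := by
  obtain ⟨ht1, ht2⟩ := abs_lt.1 ht
  have h1 : 0 < (1 + t)^2 - 4 * x * t := by
    rcases le_or_gt t 0 with h | h
    · nlinarith [mul_nonneg hx0.le (neg_nonneg.2 h), mul_pos (by linarith : 0 < 1 + t) (by linarith : 0 < 1 + t)]
    · nlinarith [mul_pos (by linarith : 0 < 1 - t) (by linarith : 0 < 1 - t),
        mul_pos h (by linarith : 0 < 1 - x)]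
  have hQ : 0 < Qf (x,t) := Real.sqrt_pos.2 h1
  have hQ2 : Qf (x,t) ^ 2 = (1+t)^2 - 4 * x * t := Real.sq_sqrt h1.le
  have h2 : 0 < 1 + t + Qf (x,t) := by linarith
  have e1 : t * sf (x,t) = (1 + t - Qf (x,t)) / 2 := by
    simp only [sf]
    field_simp
    linear_combination hQ2
  have e2 : x = sf (x,t) * (1 + t - t * sf (x,t)) := by
    rw [e1]
    simp only [sf]
    field_simp
    ring
  refine ⟨h1, h2, by simp only [sf]; positivity, ?_, by rw [e1]; linarith,
    by linear_combination e2, by linarith⟩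
  simp only [sf]
  rw [div_lt_one h2]
  by_contra! hcon
  have : Qf (x,t)^2 ≤ (2*x - 1 - t)^2 := by
    apply pow_le_pow_left₀ hQ.le; linarith
  nlinarith [mul_pos hx0 (by linarith : 0 < 1 - x)]

lemma delta_eq {x t : ℝ} (hx0 : 0 < x) (hx1 : x < 1) (ht0 : 0 < |t|) (ht : |t| < 1) :
    deltaF x t = sf (x,t) := by
  have h := (basic_rel hx0 hx1 ht).2.2.2.2.2.2
  have ht0 : t ≠ 0 := abs_pos.1 ht0
  unfold deltaF
  rw [div_eq_iff (by simpa using ht0)]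
  simp only [Qf] at h
  linarith

/-- right-hand side with the rationalized delta -/
def GF (α β c x t : ℝ) : ℝ :=
  sf (x,t) ^ (α + c + 1) / (x ^ (c + 1) * (x - t * sf (x,t)) ^ α)
    * hypExt (-β - c) (α + c + 1) (1 - β) (sf (x,t))
    * hypExt (c + 1) (β + c + 1) (α + β + 2*c + 2) (t * sf (x,t) / x)

lemma GF_an {α β c x t : ℝ} (h₁ : ∀ m : ℕ, 1 - β ≠ -(m : ℝ))
    (h₂ : ∀ m : ℕ, α + β + 2*c + 2 ≠ -(m : ℝ)) (hx0 : 0 < x) (hx1 : x < 1) (ht : |t| < 1) :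
    AnalyticAt ℝ (GF α β c x) t := by
  obtain ⟨h1, h2, s0, s1, k0, hk, -⟩ := basic_rel hx0 hx1 ht
  have hp : AnalyticAt ℝ (fun τ : ℝ => (x, τ)) t := analyticAt_const.prod analyticAt_id
  have hs : AnalyticAt ℝ (fun τ : ℝ => sf (x, τ)) t := (sf_an (p := (x,t)) h1 h2).fun_comp hp
  have ht' : AnalyticAt ℝ (fun τ : ℝ => τ) t := analyticAt_id
  have a1 := an_rpow hs s0 (α + c + 1)
  have kp : 0 < x - t * sf (x,t) := by rw [hk]; positivity
  have hxc : 0 < x ^ (c+1) := Real.rpow_pos_of_pos hx0 _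
  have a2 := an_rpow (f := fun τ => x - τ * sf (x,τ)) (by fun_prop) kp α
  have kα := Real.rpow_pos_of_pos kp α
  have a3 := (hypExt_analytic (a := -β - c) (b := α + c + 1) h₁ s1).fun_comp_of_eq hs rfl
  have hx0' := hx0.ne'
  have hz : AnalyticAt ℝ (fun τ => τ * sf (x,τ) / x) t := by fun_prop (disch := assumption)
  have hz1 : t * sf (x,t) / x < 1 := by rw [div_lt_one hx0]; linarith
  have a4 := (hypExt_analytic (a := c+1) (b := β + c + 1) h₂ hz1).fun_comp_of_eq hz rfl
  have a5 := a1.div (analyticAt_const (v := x^(c+1)) |>.mul a2) (mul_pos hxc kα).ne'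
  exact (a5.mul a3).mul a4

lemma GF_eq_RF {α β c x t : ℝ} (h₁ : ∀ m : ℕ, 1 - β ≠ -(m : ℝ))
    (h₂ : ∀ m : ℕ, α + β + 2*c + 2 ≠ -(m : ℝ)) (hx0 : 0 < x) (hx1 : x < 1) (ht : |t| < 1)
    (hg : Good (x,t)) (hz : t * sf (x,t) / x < 1/2) :
    GF α β c x t = RF (α + c + 1) (-β - c) (1 - β) (x,t) := by
  obtain ⟨h1, h2, s0, s1, k0, hk, -⟩ := basic_rel hx0 hx1 ht
  have e3 := (Good_rel hg).2.2.2.1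
  unfold GF RF
  rw [hypExt_eq h₂ hz, e3]
  have hw : t * sf (x,t) / x / (t * sf (x,t) / x - 1) = wf (x,t) := by
    simp only [wf]
    have : t * sf (x,t) / x - 1 = - (sf (x,t) * (1 - t * sf (x,t)) / x) := by
      rw [← hk]; field_simp; ring
    rw [this]
    field_simp
  have hz1 : 1 - t * sf (x,t) / x = sf (x,t) * (1 - t * sf (x,t)) / x := by
    rw [← hk]; field_simp
  rw [hw, hz1, hk]
  have hs : hypExt (-β - c) (α + c + 1) (1 - β) (sf (x,t))
      = hyp (α + c + 1) (-β - c) (1 - β) (sf (x,t)) := by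
    unfold hypExt
    rw [if_neg (not_lt.2 s0.le), hyp_symm]
  rw [hs, hyp_symm (c+1), show α + β + 2*c + 2 - (β + c + 1) = α + c + 1 by ring,
    show 1 - β - (-β - c) = c + 1 by ring, show α + c + 1 - (-β - c) + 1 = α + β + 2*c + 2 by ring]
  generalize hyp (α + c + 1) (-β - c) (1 - β) (sf (x,t)) = u
  generalize hyp (α + c + 1) (c+1) (α + β + 2*c + 2) (wf (x,t)) = v
  generalize 1 - t * sf (x,t) = k at *
  generalize sf (x,t) = s at *
  have key : s ^ (α + c + 1) / (x ^ (c+1) * (s * k) ^ α) * (s * k / x) ^ (-(c+1))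
      = (1/k) ^ (α + c + 1) := by
    rw [Real.rpow_neg (by positivity), Real.div_rpow (by positivity) hx0.le,
      Real.mul_rpow s0.le k0.le, Real.mul_rpow s0.le k0.le, Real.div_rpow zero_le_one k0.le,
      Real.one_rpow, show α + c + 1 = α + (c+1) by ring, Real.rpow_add s0 α (c+1), Real.rpow_add k0 α (c+1)]
    have q1 := (Real.rpow_pos_of_pos s0 α).ne'
    have q2 := (Real.rpow_pos_of_pos s0 (c+1)).ne'
    have q3 := (Real.rpow_pos_of_pos k0 α).ne'
    have q4 := (Real.rpow_pos_of_pos k0 (c+1)).ne'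
    have q5 := (Real.rpow_pos_of_pos hx0 (c+1)).ne'
    field_simp
  rw [← key]
  ring

lemma RF_zero_iter (A B C : ℝ) (n : ℕ) : iteratedDeriv n (fun t => RF A B C (0, t)) 0
    = (-1)^n * (n.factorial * hco A (C-B) (A-B+1) n) := by
  have : (fun t => RF A B C (0, t)) = fun t => hyp A (C-B) (A-B+1) (-t) := by
    ext t
    have hs : sf (0,t) = 0 := by simp [sf]
    simp [RF, wf, hs, hyp_zero]
  rw [this, iteratedDeriv_comp_neg, neg_zero, iter_of_fps (hyp_fps _ _ _), smul_eq_mul]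

lemma main_eq {α β c x t : ℝ} (h₁ : ∀ m : ℕ, 1 - β ≠ -(m : ℝ))
    (h₂ : ∀ m : ℕ, α + β + 2*c + 2 ≠ -(m : ℝ)) (hx0 : 0 < x) (hx1 : x < 1) (ht : |t| < 1) :
    ∑' n : ℕ, ((-1)^n * hco (α+c+1) (1 - β - (-β - c)) (α + c + 1 - (-β - c) + 1) n
      * hyp (α+c+1+n) (-β-c-n) (1-β) x) * t^n = GF α β c x t := by
  have hE : ∀ m : ℕ, α + c + 1 - (-β - c) + 1 ≠ -(m : ℝ) := fun m h => h₂ m (by linarith)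
  have hax : |x| < 1 := by rw [abs_of_pos hx0]; exact hx1
  have fps := fps_of_radius _ (radius_lhs (α+c+1) (-β-c) (1-β) (α + c + 1 - (-β - c) + 1) h₁ hx0 hx1)
  have anL : AnalyticOnNhd ℝ _ (Metric.ball (0:ℝ) 1) := fun w hw =>
    fps.analyticAt_of_mem (mem_eball (by simpa using hw))
  have anG : AnalyticOnNhd ℝ (GF α β c x) (Metric.ball 0 1) := fun w hw =>
    GF_an h₁ h₂ hx0 hx1 (by simpa using hw)
  refine anL.eqOn_of_preconnected_of_eventuallyEq anG ball_preconn (z₀ := 0) (by simp) ?_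
    (by simpa using ht)
  have hp : AnalyticAt ℝ (fun τ : ℝ => (x, τ)) 0 := analyticAt_const.prod analyticAt_id
  have hgood := Good_zero hax
  have anR : AnalyticAt ℝ (fun τ => RF (α + c + 1) (-β - c) (1 - β) (x,τ)) 0 :=
    (RF_an (p := (x,0)) hgood).fun_comp hp
  have st1 := eq_of_iter (anL 0 (by simp)) anR fun n => by
    rw [iter_of_fps fps, PD_conclusion h₁ (fun y hy => RF_an (Good_zero hy)) ?_ n hax, RF_zero_iter]
    · ring
    · filter_upwards [Good_ev (Good_zero (x := 0) (by simp))] with q hq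
      exact PD_RF h₁ hE hq
  refine st1.trans ?_
  have hs : ContinuousAt (fun τ : ℝ => sf (x, τ)) 0 :=
    ((sf_an (p := (x,0)) hgood.1 hgood.2.1).fun_comp hp).continuousAt
  have hz : ContinuousAt (fun τ : ℝ => τ * sf (x, τ) / x) 0 := by fun_prop
  have hid : ContinuousAt (fun τ : ℝ => |τ|) 0 := by fun_prop
  filter_upwards [hp.continuousAt.eventually (Good_ev hgood),
    hz.eventually (eventually_lt_nhds (b := 1/2) (by simp)),
    hid.eventually (eventually_lt_nhds (b := 1) (by simp))] with τ e1 e2 e3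
  exact (GF_eq_RF h₁ h₂ hx0 hx1 e3 e1 e2).symm

theorem Y_generating_function (α β c x t : ℝ)
    (h₁ : ∀ m : ℕ, 1 - β ≠ -(m : ℝ))
    (h₂ : ∀ m : ℕ, α + β + 2*c + 2 ≠ -(m : ℝ))
    (h₃ : ∀ m : ℕ, c + 1 ≠ -(m : ℝ))
    (h₄ : ∀ m : ℕ, α + β + c + 1 ≠ -(m : ℝ))
    (h₅ : ∀ m : ℕ, α + β + 2*c + 1 ≠ -(m : ℝ))
    (hx0 : 0 < x) (hx1 : x < 1) (ht0 : 0 < |t|) (ht1 : |t| < 1) :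
    (∑' n : ℕ, poch (α + β + c + 1) n * poch (c + 1) n / poch (α + β + 2*c + 2) n
        * Yfun α β c n x * t^n / (Nat.factorial n : ℝ))
    = deltaF x t ^ (α + c + 1) / (x ^ (c + 1) * (x - t * deltaF x t) ^ α)
        * hypExt (-β - c) (α + c + 1) (1 - β) (deltaF x t)
        * hypExt (c + 1) (β + c + 1) (α + β + 2*c + 2) (t * deltaF x t / x) := by
  rw [delta_eq hx0 hx1 ht0 ht1]
  refine Eq.trans ?_ (main_eq h₁ h₂ hx0 hx1 ht1)
  refine tsum_congr fun n => ?_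
  have h4 := poch_ne _ h₄ n
  rw [Yfun, hyp_symm, show (n:ℝ) + α + c + 1 = α + c + 1 + n by ring,
    show -(n:ℝ) - β - c = -β - c - n by ring, show 1 - β - (-β - c) = c + 1 by ring,
    show α + c + 1 - (-β - c) + 1 = α + β + 2*c + 2 by ring, hco]
  have h2 := poch_ne _ h₂ n
  have hf : (n.factorial : ℝ) ≠ 0 := by positivity
  field_simp
end
end

section
/- For every integer n ≥ 0, the value of the rescaled Atkin polynomial at 1 is 𝓐_{n+1}(1) = (7/12)·((11/12)_n·(19/12)_n)/(2n+1)!, and consequently for every real t with |t| < 1, Σ_{n=0}^{∞} C_{n+1}·𝓐_{n+1}(1)·t^n = (7/12)·F(11/12, 19/12; 3; t), where C_m = (1/(m+1))·binom(2m, m) is the m-th Catalan number. -/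
noncomputable section

/-- The rescaled Atkin polynomials `𝓐_n`. -/
def Atkin : ℕ → ℝ → ℝ
  | 0, _ => 1
  | 1, x => x - 5/12
  | 2, x => x^2 - (205/216) * x + 935/10368
  | n + 3, x =>
      (x - 2 * (((n : ℝ) + 2)^2 - 29/144) / (4 * ((n : ℝ) + 2)^2 - 1)) * Atkin (n + 2) x
      - ((((n : ℝ) + 2) - 13/12) * (((n : ℝ) + 2) - 7/12) * (((n : ℝ) + 2) - 5/12)
          * (((n : ℝ) + 2) + 1/12)
         / (2 * ((n : ℝ) + 2) * (2 * ((n : ℝ) + 2) - 1)^2 * (2 * ((n : ℝ) + 2) - 2)))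
        * Atkin (n + 1) x

theorem atkin_ratio (n : ℕ) : Atkin (n + 2) 1 =
    Atkin (n + 1) 1 * ((11/12 + (n:ℝ)) * (19/12 + (n:ℝ))) / ((2*(n:ℝ)+2) * (2*(n:ℝ)+3)) := by
  induction n with
  | zero => norm_num [Atkin]
  | succ n ih =>
    have hn : (0:ℝ) ≤ n := Nat.cast_nonneg n
    have e : Atkin (n + 1 + 2) 1 = (1 - 2 * (((n : ℝ) + 2)^2 - 29/144) / (4 * ((n : ℝ) + 2)^2 - 1)) * Atkin (n + 2) 1
      - ((((n : ℝ) + 2) - 13/12) * (((n : ℝ) + 2) - 7/12) * (((n : ℝ) + 2) - 5/12)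
          * (((n : ℝ) + 2) + 1/12)
         / (2 * ((n : ℝ) + 2) * (2 * ((n : ℝ) + 2) - 1)^2 * (2 * ((n : ℝ) + 2) - 2)))
        * Atkin (n + 1) 1 := by
      rw [show n + 1 + 2 = n + 3 from rfl, Atkin]
    rw [e, show n + 1 + 1 = n + 2 from rfl, ih]
    generalize Atkin (n + 1) 1 = A
    push_cast
    generalize (n:ℝ) = x at *
    have h1 : 4 * (x + 2)^2 - 1 = (2*x+3)*(2*x+5) := by ring
    have h2 : 2 * (x + 2) - 1 = 2*x+3 := by ring
    have h3 : 2 * (x + 2) - 2 = 2*(x+1) := by ring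
    have h4 : 2 * (x + 1) + 2 = 2*(x+2) := by ring
    have h5 : 2 * (x + 1) + 3 = 2*x+5 := by ring
    have h6 : 2 * x + 2 = 2*(x+1) := by ring
    rw [h1, h2, h3, h4, h5, h6]
    have g1 : 2*x+3 ≠ 0 := by positivity
    have g2 : 2*x+5 ≠ 0 := by positivity
    have g3 : x+1 ≠ 0 := by positivity
    have g4 : x+2 ≠ 0 := by positivity
    field_simp
    ring

theorem poch_succ_right (a : ℝ) (n : ℕ) : poch a (n + 1) = poch a n * (a + n) := by
  simp [poch, Finset.prod_range_succ]

theorem atkin_value (n : ℕ) : Atkin (n + 1) 1 =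
      ((7:ℝ)/12) * (poch (11/12) n * poch (19/12) n) / (Nat.factorial (2*n + 1) : ℝ) := by
  induction n with
  | zero => norm_num [Atkin, poch]
  | succ n ih =>
    rw [show n + 1 + 1 = n + 2 from rfl, atkin_ratio, ih, poch_succ_right, poch_succ_right,
      show 2 * (n + 1) + 1 = (2 * n + 1) + 1 + 1 by ring, Nat.factorial_succ (2 * n + 1 + 1),
      Nat.factorial_succ (2 * n + 1)]
    have : (Nat.factorial (2*n+1) : ℝ) ≠ 0 := by positivity
    push_cast
    have g1 : 2*(n:ℝ)+3 ≠ 0 := by positivity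
    have g2 : 2*(n:ℝ)+2 ≠ 0 := by positivity
    have g3 : 2*(n:ℝ)+1+1 ≠ 0 := by positivity
    have g4 : 2*(n:ℝ)+1+1+1 ≠ 0 := by positivity
    field_simp
    ring

theorem poch_three (n : ℕ) : poch 3 n = (Nat.factorial (n + 2) : ℝ) / 2 := by
  induction n with
  | zero => norm_num [poch]
  | succ n ih =>
    rw [poch_succ_right, ih, show n + 1 + 2 = (n + 2) + 1 from rfl, Nat.factorial_succ (n + 2)]
    push_cast
    ring

theorem choose_value (m : ℕ) : (Nat.choose (2*(m + 1)) (m + 1) : ℝ)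
    = (Nat.factorial (2*m+2) : ℝ) / ((Nat.factorial (m+1) : ℝ) * (Nat.factorial (m+1) : ℝ)) := by
  rw [Nat.cast_choose ℝ (by omega), show 2 * (m + 1) - (m + 1) = m + 1 by omega,
    show 2 * (m + 1) = 2 * m + 2 by ring]

theorem atkin_at_one (n : ℕ) (t : ℝ) (ht : |t| < 1) :
    Atkin (n + 1) 1 =
      ((7:ℝ)/12) * (poch (11/12) n * poch (19/12) n) / (Nat.factorial (2*n + 1) : ℝ)
    ∧ (∑' m : ℕ, ((Nat.choose (2*(m + 1)) (m + 1) : ℝ) / ((m + 1 : ℕ) + 1 : ℝ))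
        * Atkin (m + 1) 1 * t^m)
      = (7/12) * hyp (11/12) (19/12) 3 t := by
  refine ⟨atkin_value n, ?_⟩
  rw [hyp, ← tsum_mul_left]
  congr 1
  funext m
  rw [atkin_value, choose_value, poch_three, Nat.factorial_succ (2*m+1), Nat.factorial_succ (m+1),
    Nat.factorial_succ m]
  have g1 : (Nat.factorial (2*m+1) : ℝ) ≠ 0 := by positivity
  have g2 : (Nat.factorial m : ℝ) ≠ 0 := by positivity
  push_cast
  have g3 : (m:ℝ)+1 ≠ 0 := by positivity
  have g4 : (m:ℝ)+1+1 ≠ 0 := by positivity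
  field_simp
  ring
end
end
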